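/- arXiv:1901.07830 — 2 statements merged into one kernel-verified Lean document; each statement's English description precedes it below -/
import Mathlib

section
/- For all integers n ≥ 2 and 0 ≤ k ≤ n, one has A_D(n,k) = [Σ_{r=0}^{k} (−1)^{k−r} · 2^r · r! · S_D(n,r) · C(n−r, k−r)] − n · 2^{n−1} · A(n−1, k−1), where C(a,b) denotes the binomial coefficient and A(n−1, k−1) := 0 when k = 0. -/
open Classical Finset

/-! ### Signed permutations (type B), window notation -/

/-- `w` is the window notation of a signed permutation of `{1,…,n}`. -/
def IsSignedPerm {n : ℕ} (w : Fin n → ℤ) : Prop :=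
  (∀ i, 1 ≤ |w i| ∧ |w i| ≤ (n : ℤ)) ∧ Function.Injective fun i => |w i|

/-- The value `β(i)` for `1 ≤ i ≤ n`, and `0` otherwise (so `β(0) = 0`). -/
def bVal {n : ℕ} (w : Fin n → ℤ) (i : ℕ) : ℤ :=
  if h : 1 ≤ i ∧ i ≤ n then w ⟨i - 1, by omega⟩ else 0

/-- Type `B` descent number: `#{i ∈ {0,…,n−1} : β(i) > β(i+1)}`, with `β(0) = 0`. -/
noncomputable def desB {n : ℕ} (w : Fin n → ℤ) : ℕ :=
  ((Finset.range n).filter fun i => bVal w (i + 1) < bVal w i).card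

/-- Type `B` Eulerian number `A_B(n,k)`. -/
noncomputable def EulB (n k : ℕ) : ℕ :=
  Nat.card { w : Fin n → ℤ // IsSignedPerm w ∧ desB w = k }

/-- Type `D` descent number: as in type `B` but with the convention `γ(0) = −γ(2)`. -/
noncomputable def desD {n : ℕ} (w : Fin n → ℤ) : ℕ :=
  ((Finset.range n).filter fun i =>
    bVal w (i + 1) < (if i = 0 then -(bVal w 2) else bVal w i)).card

/-- `w` has an even number of negative entries. -/
def IsEvenSigned {n : ℕ} (w : Fin n → ℤ) : Prop :=
  Even ((Finset.univ.filter fun i => w i < 0)).card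

/-- Type `D` Eulerian number `A_D(n,k)`. -/
noncomputable def EulD (n k : ℕ) : ℕ :=
  Nat.card { w : Fin n → ℤ // IsSignedPerm w ∧ IsEvenSigned w ∧ desD w = k }

/-! ### Set partitions of types B and D -/

/-- The negative `−C` of a block `C`. -/
def negSet (C : Finset ℤ) : Finset ℤ := C.image fun x => -x

/-- A `Bₙ`-partition: a set partition of `{−n,…,−1,1,…,n}` such that at most one block
satisfies `C = −C` (the zero-block), and `−C` is a block whenever `C` is. -/
structure BPartition (n : ℕ) where
  blocks : Finset (Finset ℤ)
  cover : ∀ x : ℤ, (x ≠ 0 ∧ |x| ≤ (n : ℤ)) ↔ ∃ C ∈ blocks, x ∈ C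
  nonempty : ∀ C ∈ blocks, C.Nonempty
  disj : ∀ C ∈ blocks, ∀ C' ∈ blocks, C ≠ C' → Disjoint C C'
  closed : ∀ C ∈ blocks, negSet C ∈ blocks
  zeroUnique : ∀ C ∈ blocks, ∀ C' ∈ blocks, negSet C = C → negSet C' = C' → C = C'

/-- A `Dₙ`-partition: a `Bₙ`-partition whose zero-block, if present, has at least
two positive elements. -/
def IsDPartition {n : ℕ} (P : BPartition n) : Prop :=
  ∀ C ∈ P.blocks, negSet C = C → 2 ≤ (C.filter fun x => 0 < x).card

/-- `P` has exactly `r` pairs `{C, −C}` of nonzero blocks. -/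
def hasPairs {n : ℕ} (P : BPartition n) (r : ℕ) : Prop :=
  (P.blocks.filter fun C => negSet C ≠ C).card = 2 * r

/-- Stirling number of the second kind of type `B`. -/
noncomputable def SB (n r : ℕ) : ℕ :=
  Nat.card { P : BPartition n // hasPairs P r }

/-- Stirling number of the second kind of type `D`. -/
noncomputable def SD (n r : ℕ) : ℕ :=
  Nat.card { P : BPartition n // IsDPartition P ∧ hasPairs P r }

/-- An ordered `Bₙ`-partition: a `Bₙ`-partition with a linear order on its blocks in
which the zero-block (if present) comes first and `C, −C` are always adjacent. -/
structure OrderedBPartition (n : ℕ) where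
  P : BPartition n
  order : List (Finset ℤ)
  nodup : order.Nodup
  same : order.toFinset = P.blocks
  zeroFirst : ∀ C ∈ P.blocks, negSet C = C → order[0]? = some C
  adjacent : ∀ C ∈ P.blocks, negSet C ≠ C →
    ∃ i : ℕ, (order[i]? = some C ∧ order[i+1]? = some (negSet C)) ∨
             (order[i]? = some (negSet C) ∧ order[i+1]? = some C)

/-! ### Classical Stirling and Eulerian numbers -/

/-- The classical Stirling number of the second kind `S(n,r)`. -/
noncomputable def Stir (n r : ℕ) : ℕ :=
  Nat.card { P : Finpartition (Finset.univ : Finset (Fin n)) // P.parts.card = r }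

/-- Number of descents of a permutation of `{1,…,n}`. -/
noncomputable def desA {n : ℕ} (σ : Equiv.Perm (Fin n)) : ℕ :=
  ((Finset.range (n - 1)).filter fun i =>
    ∃ h : i + 1 < n, σ ⟨i + 1, h⟩ < σ ⟨i, Nat.lt_of_succ_lt h⟩).card

/-- The classical Eulerian number `A(n,k)`: permutations with `k−1` descents
(and `A(n,0) = 0`). -/
noncomputable def EulA (n k : ℕ) : ℕ :=
  if k = 0 then 0 else Nat.card { σ : Equiv.Perm (Fin n) // desA σ = k - 1 }

/-! ### Colored permutations -/

/-- `π` is (the window notation of) a colored permutation in `G_{m,n}`. -/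
def IsColoredPerm {m n : ℕ} (π : Fin n → Fin n × ZMod m) : Prop :=
  Function.Bijective fun i => (π i).1

/-- The color order `a ≺ b` on the colored alphabet. -/
def colorLt {m n : ℕ} (a b : Fin n × ZMod m) : Prop :=
  b.2.val < a.2.val ∨ (a.2 = b.2 ∧ a.1 < b.1)

/-- The descent number `des_G` of a colored permutation. -/
noncomputable def desG {m n : ℕ} (π : Fin n → Fin n × ZMod m) : ℕ :=
  ((Finset.range (n - 1)).filter fun i =>
    ∃ h : i + 1 < n, colorLt (π ⟨i + 1, h⟩) (π ⟨i, Nat.lt_of_succ_lt h⟩)).card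
  + (if h : 0 < n then (if (π ⟨0, h⟩).2 ≠ 0 then 1 else 0) else 0)

/-- The Eulerian number `A_m(n,k)` of `G_{m,n}`. -/
noncomputable def EulG (m n k : ℕ) : ℕ :=
  Nat.card { π : Fin n → Fin n × ZMod m // IsColoredPerm π ∧ desG π = k }

/-- The shift `C^{[t]}` of a block of the colored alphabet. -/
def shiftBlock {m n : ℕ} (t : ZMod m) (C : Finset (Fin n × ZMod m)) :
    Finset (Fin n × ZMod m) :=
  C.image fun p => (p.1, p.2 + t)

/-- A `G_{m,n}`-partition. -/
structure GPartition (m n : ℕ) where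
  blocks : Finset (Finset (Fin n × ZMod m))
  cover : ∀ x : Fin n × ZMod m, ∃ C ∈ blocks, x ∈ C
  nonempty : ∀ C ∈ blocks, C.Nonempty
  disj : ∀ C ∈ blocks, ∀ C' ∈ blocks, C ≠ C' → Disjoint C C'
  closed : ∀ C ∈ blocks, shiftBlock 1 C ∈ blocks
  zeroUnique : ∀ C ∈ blocks, ∀ C' ∈ blocks,
    shiftBlock 1 C = C → shiftBlock 1 C' = C' → C = C'

/-- The number of equivalence classes (orbits under shifting) of nonzero blocks. -/
noncomputable def numClasses {m n : ℕ} (P : GPartition m n) : ℕ :=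
  ((P.blocks.filter fun C => shiftBlock 1 C ≠ C).image
    fun C => (Finset.range m).image fun t => shiftBlock (t : ZMod m) C).card

/-- Stirling number of the second kind `S_m(n,r)` for `G_{m,n}`. -/
noncomputable def SG (m n r : ℕ) : ℕ :=
  Nat.card { P : GPartition m n // numClasses P = r }

/-- An ordered `G_{m,n}`-partition. -/
structure OrderedGPartition (m n : ℕ) where
  P : GPartition m n
  order : List (Finset (Fin n × ZMod m))
  nodup : order.Nodup
  same : order.toFinset = P.blocks
  zeroFirst : ∀ C ∈ P.blocks, shiftBlock 1 C = C → order[0]? = some C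
  consec : ∀ C ∈ P.blocks, shiftBlock 1 C ≠ C →
    ∃ i : ℕ, ∃ s : ZMod m, ∀ t : ℕ, t < m →
      order[i + t]? = some (shiftBlock (s + (t : ZMod m)) C)


/-! ### Algebraic part -/

theorem choose_alt (N r m : ℕ) :
    ∑ j ∈ Finset.range (N + 1), (-1 : ℤ) ^ j * (N.choose j : ℤ) * ((m + N - j).choose (N + r) : ℤ)
      = (m.choose r : ℤ) := by
  induction N generalizing r m with
  | zero => simp
  | succ N ih =>
    have key : ∀ j ∈ Finset.range (N + 1),
        (-1 : ℤ) ^ j * (N.choose j : ℤ) * ((m + N - j).choose (N + r) : ℤ)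
        = (-1 : ℤ) ^ j * (N.choose j : ℤ) * ((m + (N + 1) - j).choose (N + 1 + r) : ℤ)
          - (-1 : ℤ) ^ j * (N.choose j : ℤ) * ((m + N - j).choose (N + 1 + r) : ℤ) := by
      intro j hj
      have hj' : j ≤ N := by
        have := Finset.mem_range.1 hj
        omega
      have h1 : m + (N + 1) - j = (m + N - j) + 1 := by omega
      have h2 : N + 1 + r = (N + r) + 1 := by omega
      rw [h1, h2, Nat.choose_succ_succ]
      push_cast
      ring
    rw [← ih r m, Finset.sum_congr rfl key, Finset.sum_sub_distrib]
    rw [Finset.sum_range_succ']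
    have e1 : ∀ j ∈ Finset.range (N + 1),
        (-1 : ℤ) ^ (j + 1) * ((N + 1).choose (j + 1) : ℤ)
            * ((m + (N + 1) - (j + 1)).choose (N + 1 + r) : ℤ)
        = - ((-1 : ℤ) ^ j * (N.choose j : ℤ) * ((m + N - j).choose (N + 1 + r) : ℤ))
          + (-1 : ℤ) ^ (j + 1) * (N.choose (j + 1) : ℤ)
            * ((m + (N + 1) - (j + 1)).choose (N + 1 + r) : ℤ) := by
      intro j hj
      have h1 : m + (N + 1) - (j + 1) = m + N - j := by omega
      rw [h1, Nat.choose_succ_succ]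
      push_cast
      ring
    rw [Finset.sum_congr rfl e1, Finset.sum_add_distrib, Finset.sum_neg_distrib]
    have e2 : ∑ j ∈ Finset.range (N + 1),
        (-1 : ℤ) ^ j * (N.choose j : ℤ) * ((m + (N + 1) - j).choose (N + 1 + r) : ℤ)
        = ∑ j ∈ Finset.range (N + 1 + 1),
        (-1 : ℤ) ^ j * (N.choose j : ℤ) * ((m + (N + 1) - j).choose (N + 1 + r) : ℤ) := by
      rw [Finset.sum_range_succ _ (N + 1)]
      simp
    rw [e2, Finset.sum_range_succ' _ (N + 1)]
    simp
    ring

theorem basis_indep (n : ℕ) (a : ℕ → ℤ)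
    (h : ∀ m : ℕ, ∑ k ∈ Finset.range (n + 1), a k * ((m + n - k).choose n : ℤ) = 0) :
    ∀ k ≤ n, a k = 0 := by
  intro k
  induction k using Nat.strong_induction_on with
  | _ k ih =>
    intro hk
    have := h k
    rw [Finset.sum_eq_single k] at this
    · have h2 : k + n - k = n := by omega
      rw [h2] at this
      simpa using this
    · intro b hb hne
      have hb' : b ≤ n := by
        have := Finset.mem_range.1 hb
        omega
      rcases lt_or_gt_of_ne hne with hlt | hgt
      · rw [ih b hlt hb', zero_mul]
      · rw [Nat.choose_eq_zero_of_lt (by omega)]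
        simp
    · intro hk'
      exact absurd (Finset.mem_range.2 (by omega)) hk'

theorem inversion (n : ℕ) (a b : ℕ → ℤ)
    (h : ∀ m : ℕ, ∑ k ∈ Finset.range (n + 1), a k * ((m + n - k).choose n : ℤ)
      = ∑ r ∈ Finset.range (n + 1), b r * (m.choose r : ℤ)) (k : ℕ) (hk : k ≤ n) :
    a k = ∑ r ∈ Finset.range (k + 1), (-1 : ℤ) ^ (k - r) * b r * ((n - r).choose (k - r) : ℤ) := by
  have := basis_indep n (fun k => a k -
    ∑ r ∈ Finset.range (k + 1), (-1 : ℤ) ^ (k - r) * b r * ((n - r).choose (k - r) : ℤ)) ?_ k hk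
  · exact sub_eq_zero.1 this
  intro m
  simp only [sub_mul]
  rw [Finset.sum_sub_distrib, h m, sub_eq_zero]
  simp only [Finset.sum_mul]
  have e : ∀ r ∈ Finset.range (n + 1), b r * (m.choose r : ℤ) =
      ∑ k ∈ Finset.range (n + 1), if r ≤ k then
        (-1 : ℤ) ^ (k - r) * b r * ((n - r).choose (k - r) : ℤ) * ((m + n - k).choose n : ℤ)
        else 0 := by
    intro r hr
    have hr' : r ≤ n := by
      have := Finset.mem_range.1 hr
      omega
    rw [← choose_alt (n - r) r m, Finset.mul_sum, ← Finset.sum_filter]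
    refine Finset.sum_bij (fun j _ => j + r) ?_ ?_ ?_ ?_
    · intro j hj
      simp only [Finset.mem_filter, Finset.mem_range] at *
      omega
    · intro a _ b _ h
      simpa using h
    · intro k hk
      simp only [Finset.mem_filter, Finset.mem_range] at hk
      exact ⟨k - r, by simp only [Finset.mem_range]; omega, by omega⟩
    · intro j hj
      have h1 : n - r + r = n := by omega
      have h2 : m + (n - r) - j = m + n - (j + r) := by omega
      rw [h1, h2, Nat.add_sub_cancel]
      ring
  rw [Finset.sum_congr rfl e, Finset.sum_comm]
  refine Finset.sum_congr rfl fun k hk => ?_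
  rw [← Finset.sum_filter]
  refine Finset.sum_congr ?_ fun _ _ => rfl
  ext r
  simp only [Finset.mem_filter, Finset.mem_range] at *
  omega


/-! ### Counting chains -/

theorem hockey (a n m : ℕ) (ha : a ≤ n) :
    ∑ c ∈ Finset.range (m + 1), (c + a).choose n = (m + 1 + a).choose (n + 1) := by
  induction m with
  | zero =>
    rcases Nat.lt_or_eq_of_le ha with h | h
    · simp only [zero_add, Finset.range_one, Finset.sum_singleton]
      rw [Nat.choose_eq_zero_of_lt h, Nat.choose_eq_zero_of_lt (by omega)]
    · subst h
      simp [add_comm]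
  | succ m ih =>
    rw [Finset.sum_range_succ, ih]
    have : m + 1 + 1 + a = (m + 1 + a) + 1 := by omega
    rw [this, Nat.choose_succ_succ, Nat.succ_eq_add_one]
    omega

theorem bVal_succ {n : ℕ} (w : Fin n → ℤ) (i : ℕ) (h : i < n) : bVal w (i + 1) = w ⟨i, h⟩ := by
  unfold bVal
  rw [dif_pos (by omega)]
  simp

theorem bVal_zero {n : ℕ} (w : Fin n → ℤ) : bVal w 0 = 0 := by
  unfold bVal
  rw [dif_neg (by omega)]

/-- chains -/
noncomputable def chainSet (δ : ℕ → ℕ) (n : ℕ) (m : ℤ) : Finset (Fin n → ℤ) :=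
  (Fintype.piFinset fun _ => Finset.Icc 0 m).filter fun g =>
    ∀ i < n, bVal g i + (δ i : ℤ) ≤ bVal g (i + 1)

theorem bVal_snoc {n : ℕ} (g : Fin n → ℤ) (c : ℤ) (i : ℕ) (h : i ≤ n) :
    bVal (Fin.snoc g c : Fin (n + 1) → ℤ) i = bVal g i := by
  rcases i with _ | i
  · simp [bVal_zero]
  · rw [bVal_succ _ _ (by omega), bVal_succ _ _ (by omega)]
    have : (⟨i, by omega⟩ : Fin (n + 1)) = Fin.castSucc ⟨i, by omega⟩ := rfl
    rw [this, Fin.snoc_castSucc]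

theorem bVal_snoc_last {n : ℕ} (g : Fin n → ℤ) (c : ℤ) :
    bVal (Fin.snoc g c : Fin (n + 1) → ℤ) (n + 1) = c := by
  rw [bVal_succ _ _ (by omega)]
  have : (⟨n, by omega⟩ : Fin (n + 1)) = Fin.last n := rfl
  rw [this, Fin.snoc_last]

theorem chain_le_last {δ : ℕ → ℕ} {n : ℕ} (g : Fin n → ℤ)
    (h : ∀ i < n, bVal g i + (δ i : ℤ) ≤ bVal g (i + 1)) (i j : ℕ) (hij : i ≤ j) (hj : j ≤ n) :
    bVal g i ≤ bVal g j := by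
  induction j with
  | zero =>
    have : i = 0 := by omega
    rw [this]
  | succ j ih =>
    rcases Nat.lt_or_eq_of_le hij with h1 | h1
    · have := ih (by omega) (by omega)
      have := h j (by omega)
      omega
    · rw [h1]

theorem mem_chainSet {δ : ℕ → ℕ} {n : ℕ} {m : ℤ} (hm : 0 ≤ m) {g : Fin n → ℤ} :
    g ∈ chainSet δ n m ↔ (∀ i < n, bVal g i + (δ i : ℤ) ≤ bVal g (i + 1)) ∧ bVal g n ≤ m := by
  unfold chainSet
  simp only [Finset.mem_filter, Fintype.mem_piFinset, Finset.mem_Icc]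
  constructor
  · rintro ⟨h1, h2⟩
    refine ⟨h2, ?_⟩
    rcases n with _ | n
    · simpa [bVal_zero] using hm
    · rw [bVal_succ _ _ (by omega)]
      exact (h1 _).2
  · rintro ⟨h1, h2⟩
    refine ⟨fun i => ?_, h1⟩
    have e := bVal_succ g i.1 i.2
    have a1 := chain_le_last g h1 0 (i.1 + 1) (by omega) (by have := i.2; omega)
    have a2 := chain_le_last g h1 (i.1 + 1) n (by have := i.2; omega) le_rfl
    rw [bVal_zero] at a1
    rw [e] at a1 a2
    exact ⟨a1, le_trans a2 h2⟩

theorem card_chainSet (δ : ℕ → ℕ) (hδ : ∀ i, δ i ≤ 1) (n m : ℕ) :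
    (chainSet δ n m).card = (m + n - ∑ i ∈ Finset.range n, δ i).choose n := by
  induction n generalizing m with
  | zero =>
    have : chainSet δ 0 m = Finset.univ := by
      ext g
      simp only [mem_chainSet (Int.natCast_nonneg m), bVal_zero]
      simp
      exact Subsingleton.elim _ _
    rw [this]
    simp
  | succ n ih =>
    have hS : ∑ i ∈ Finset.range n, δ i ≤ n := by
      calc _ ≤ ∑ i ∈ Finset.range n, 1 := Finset.sum_le_sum fun i _ => hδ i
        _ = n := by simp
    have e : chainSet δ (n + 1) m = (Finset.range (m + 1 - δ n)).biUnion fun c =>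
        (chainSet δ n (c : ℕ)).image fun g => (Fin.snoc g ((c : ℤ) + δ n) : Fin (n + 1) → ℤ) := by
      ext g
      rw [mem_chainSet (Int.natCast_nonneg m)]
      simp only [Finset.mem_biUnion, Finset.mem_image, Finset.mem_range]
      constructor
      · rintro ⟨h1, h2⟩
        have h3 := h1 n (by omega)
        have h4 := chain_le_last g h1 0 n (by omega) (by omega)
        rw [bVal_zero] at h4
        refine ⟨(bVal g (n + 1) - δ n).toNat, by omega, Fin.init g, ?_, ?_⟩
        · rw [mem_chainSet (Int.natCast_nonneg _)]
          have hg : g = Fin.snoc (Fin.init g) (g (Fin.last n)) := (Fin.snoc_init_self g).symm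
          have hb : ∀ i ≤ n, bVal (Fin.init g : Fin n → ℤ) i = bVal g i := by
            intro i hi
            rw [← bVal_snoc (Fin.init g) (g (Fin.last n)) i hi, Fin.snoc_init_self]
          refine ⟨fun i hi => ?_, ?_⟩
          · rw [hb i (by omega), hb (i + 1) (by omega)]
            exact h1 i (by omega)
          · rw [hb n le_rfl]
            omega
        · have : (((bVal g (n + 1) - δ n).toNat : ℕ) : ℤ) + δ n = g (Fin.last n) := by
            have := bVal_succ g n (by omega)
            have e : (⟨n, by omega⟩ : Fin (n + 1)) = Fin.last n := rfl
            rw [e] at this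
            omega
          rw [this]
          exact Fin.snoc_init_self g
      · rintro ⟨c, hc, g', hg', rfl⟩
        rw [mem_chainSet (Int.natCast_nonneg _)] at hg'
        rw [bVal_snoc_last]
        refine ⟨fun i hi => ?_, by omega⟩
        rcases Nat.lt_or_eq_of_le (Nat.le_of_lt_succ hi) with h | h
        · rw [bVal_snoc _ _ _ (by omega), bVal_snoc _ _ _ (by omega)]
          exact hg'.1 i h
        · subst h
          rw [bVal_snoc_last, bVal_snoc _ _ _ le_rfl]
          have := hg'.2
          omega
    rw [e, Finset.card_biUnion]
    · have : ∀ c ∈ Finset.range (m + 1 - δ n),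
          ((chainSet δ n (c : ℕ)).image
            fun g => (Fin.snoc g ((c : ℤ) + δ n) : Fin (n + 1) → ℤ)).card
          = (c + (n - ∑ i ∈ Finset.range n, δ i)).choose n := by
        intro c _
        rw [Finset.card_image_of_injective, ih]
        · congr 1
          omega
        · intro g g' h
          exact (Fin.snoc_injective2 h).1
      rw [Finset.sum_congr rfl this, Finset.sum_range_succ]
      have hd := hδ n
      by_cases hz : m + 1 - δ n = 0
      · rw [hz]
        simp only [Finset.range_zero, Finset.sum_empty]
        rw [Nat.choose_eq_zero_of_lt]
        omega
      · obtain ⟨q, hq⟩ := Nat.exists_eq_succ_of_ne_zero hz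
        rw [hq, Nat.succ_eq_add_one, hockey _ _ _ (by omega)]
        congr 1
        omega
    · intro c _ c' _ hne
      rw [Function.onFun, Finset.disjoint_left]
      intro g hg hg'
      simp only [Finset.mem_image] at hg hg'
      obtain ⟨a, _, rfl⟩ := hg
      obtain ⟨b, _, hb⟩ := hg'
      have := (Fin.snoc_injective2 hb).2
      apply hne
      omega

/-! ### Worpitzky -/

noncomputable def wSet {n : ℕ} (v : Fin n → ℤ) (m : ℕ) : Finset (Fin n → ℤ) :=
  (Fintype.piFinset fun _ => Finset.Icc 0 (m : ℤ)).filter fun f => ∀ j, v j < 0 → f j ≠ 0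

def keyFun {n : ℕ} (v f : Fin n → ℤ) : Fin n → ℤ ×ₗ ℤ := fun j => toLex (f j, v j)

theorem chain_iff {n : ℕ} (u g : Fin n → ℤ) (hu : Function.Injective u) (h0 : ∀ i, u i ≠ 0) :
    (∀ i < n, bVal g i + ((if bVal u (i + 1) < bVal u i then 1 else 0 : ℕ) : ℤ) ≤ bVal g (i + 1))
    ↔ (∀ i j, i < j → j ≤ n → bVal g i ≤ bVal g j ∧ (bVal g i = bVal g j → bVal u i < bVal u j)) := by
  constructor
  · intro h i j hij hj
    induction j with
    | zero => omega
    | succ j ih =>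
      have h1 := h j (by omega)
      have hne : bVal u j ≠ bVal u (j + 1) := by
        rcases j with _ | j
        · rw [bVal_zero, bVal_succ _ _ (by omega)]
          exact (h0 _).symm
        · rw [bVal_succ _ _ (by omega), bVal_succ _ _ (by omega)]
          intro e
          have := hu e
          simp at this
      rcases Nat.lt_or_eq_of_le (Nat.le_of_lt_succ hij) with hlt | heq
      · have := ih hlt (by omega)
        split_ifs at h1 with hd
        · push_cast at h1
          exact ⟨by omega, by omega⟩
        · push_cast at h1
          exact ⟨by omega, by omega⟩
      · subst heq
        split_ifs at h1 with hd
        · push_cast at h1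
          exact ⟨by omega, by omega⟩
        · push_cast at h1
          exact ⟨by omega, by omega⟩
  · intro h i hi
    have := h i (i + 1) (by omega) (by omega)
    split_ifs with hd
    · push_cast
      omega
    · push_cast
      omega

theorem desB_eq_sum {n : ℕ} (u : Fin n → ℤ) :
    desB u = ∑ i ∈ Finset.range n, (if bVal u (i + 1) < bVal u i then 1 else 0) := by
  unfold desB
  rw [Finset.card_filter]

theorem desB_le {n : ℕ} (u : Fin n → ℤ) : desB u ≤ n := by
  unfold desB
  exact (Finset.card_filter_le _ _).trans (by simp)

theorem fiber_iff {n : ℕ} (v : Fin n → ℤ) (hv : Function.Injective v) (h0 : ∀ i, v i ≠ 0) (m : ℕ)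
    (σ : Equiv.Perm (Fin n)) (f : Fin n → ℤ) :
    (f ∈ wSet v m ∧ Tuple.sort (keyFun v f) = σ) ↔ f ∘ σ ∈ chainSet
      (fun i => if bVal (v ∘ σ) (i + 1) < bVal (v ∘ σ) i then 1 else 0) n m := by
  unfold wSet chainSet
  simp only [Finset.mem_filter, Fintype.mem_piFinset, Finset.mem_Icc]
  rw [chain_iff (v ∘ σ) (f ∘ σ) (hv.comp σ.injective) (fun i => h0 _)]
  constructor
  · rintro ⟨⟨h1, h2⟩, rfl⟩
    refine ⟨fun i => h1 _, ?_⟩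
    intro i j hij hj
    obtain ⟨j, rfl⟩ : ∃ j', j = j' + 1 := ⟨j - 1, by omega⟩
    rcases i with _ | i
    · rw [bVal_zero, bVal_zero, bVal_succ _ _ (by omega), bVal_succ _ _ (by omega)]
      refine ⟨(h1 _).1, fun he => ?_⟩
      by_contra hn
      exact h2 _ (lt_of_le_of_ne (not_lt.1 hn) (h0 _)) he.symm
    · rw [bVal_succ _ _ (by omega), bVal_succ _ _ (by omega), bVal_succ _ _ (by omega),
        bVal_succ _ _ (by omega)]
      have hm := Tuple.monotone_sort (keyFun v f)
      have hl : (⟨i, by omega⟩ : Fin n) ≤ ⟨j, by omega⟩ := by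
        rw [Fin.mk_le_mk]
        omega
      have hle := hm hl
      have hne : (⟨i, by omega⟩ : Fin n) ≠ ⟨j, by omega⟩ := by
        intro e
        rw [Fin.mk.injEq] at e
        omega
      simp only [Function.comp_apply, keyFun, Prod.Lex.toLex_le_toLex] at hle ⊢
      have hvne : ∀ τ : Equiv.Perm (Fin n),
          v (τ (⟨i, by omega⟩ : Fin n)) ≠ v (τ ⟨j, by omega⟩) := fun τ e =>
        hne (τ.injective (hv e))
      rcases hle with h | h
      · exact ⟨h.le, fun e => absurd e h.ne⟩
      · exact ⟨h.1.le, fun _ => lt_of_le_of_ne h.2 (hvne _)⟩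
  · rintro ⟨h1, h2⟩
    have h1' : ∀ j, 0 ≤ f j ∧ f j ≤ m := by
      intro j
      have := h1 (σ.symm j)
      simpa using this
    have hstep : ∀ i j : Fin n, i < j → f (σ i) ≤ f (σ j) ∧
        (f (σ i) = f (σ j) → v (σ i) < v (σ j)) := by
      intro i j hij
      have := h2 (i.1 + 1) (j.1 + 1) (by have := Fin.lt_def.1 hij; omega) j.2
      rw [bVal_succ _ _ i.2, bVal_succ _ _ j.2, bVal_succ _ _ i.2, bVal_succ _ _ j.2] at this
      exact this
    refine ⟨⟨h1', fun j hj hf => ?_⟩, ?_⟩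
    · have := h2 0 ((σ.symm j).1 + 1) (by omega) (σ.symm j).2
      rw [bVal_zero, bVal_zero, bVal_succ _ _ (σ.symm j).2, bVal_succ _ _ (σ.symm j).2] at this
      simp only [Function.comp_apply, Fin.eta, Equiv.apply_symm_apply] at this
      have := this.2 hf.symm
      omega
    · symm
      rw [Tuple.eq_sort_iff]
      constructor
      · intro i j hij
        rcases lt_or_eq_of_le hij with h | h
        · have := hstep i j h
          simp only [Function.comp_apply, keyFun, Prod.Lex.toLex_le_toLex]
          rcases lt_or_eq_of_le this.1 with h3 | h3
          · exact Or.inl h3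
          · exact Or.inr ⟨h3, (this.2 h3).le⟩
        · rw [h]
      · intro i j hij he
        exfalso
        simp only [keyFun, EmbeddingLike.apply_eq_iff_eq, Prod.mk.injEq] at he
        exact hij.ne (σ.injective (hv he.2))

theorem sort_fiber {n : ℕ} (v : Fin n → ℤ) (hv : Function.Injective v) (h0 : ∀ i, v i ≠ 0) (m : ℕ)
    (σ : Equiv.Perm (Fin n)) :
    ((wSet v m).filter fun f => Tuple.sort (keyFun v f) = σ).card
      = (m + n - desB (v ∘ σ)).choose n := by
  rw [desB_eq_sum, ← card_chainSet _ (by intro i; split_ifs <;> omega) n m]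
  refine Finset.card_bij (fun f _ => f ∘ σ) ?_ ?_ ?_
  · intro f hf
    exact (fiber_iff v hv h0 m σ f).1 (Finset.mem_filter.1 hf)
  · intro f _ f' _ h
    exact σ.surjective.injective_comp_right h
  · intro g hg
    have e : (g ∘ σ.symm) ∘ σ = g := by
      ext i
      simp
    refine ⟨g ∘ σ.symm, Finset.mem_filter.2 ((fiber_iff v hv h0 m σ _).2 ?_), e⟩
    rw [e]
    exact hg

theorem worpitzky {n : ℕ} (v : Fin n → ℤ) (hv : Function.Injective v) (h0 : ∀ i, v i ≠ 0) (m : ℕ) :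
    ∑ σ : Equiv.Perm (Fin n), (m + n - desB (v ∘ σ)).choose n = (wSet v m).card := by
  rw [Finset.card_eq_sum_card_fiberwise (f := fun f => Tuple.sort (keyFun v f))
    (t := Finset.univ) (fun _ _ => Finset.mem_coe.2 (Finset.mem_univ _))]
  exact Finset.sum_congr rfl fun σ _ => (sort_fiber v hv h0 m σ).symm


/-! ### Signed permutations -/

noncomputable def signedSet (n : ℕ) : Finset (Fin n → ℤ) :=
  (Fintype.piFinset fun _ => Finset.Icc (-(n : ℤ)) n).filter IsSignedPerm

theorem mem_signedSet {n : ℕ} {w : Fin n → ℤ} : w ∈ signedSet n ↔ IsSignedPerm w := by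
  unfold signedSet
  simp only [Finset.mem_filter, Fintype.mem_piFinset, Finset.mem_Icc, and_iff_right_iff_imp]
  intro h i
  exact abs_le.1 (h.1 i).2

def vS {n : ℕ} (s : Fin n → Bool) (j : Fin n) : ℤ :=
  if s j then -((j : ℕ) + 1 : ℤ) else ((j : ℕ) + 1 : ℤ)

theorem abs_vS {n : ℕ} (s : Fin n → Bool) (j : Fin n) : |vS s j| = ((j : ℕ) + 1 : ℤ) := by
  unfold vS
  split_ifs
  · rw [abs_neg, abs_of_nonneg (by positivity)]
  · rw [abs_of_nonneg (by positivity)]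

theorem vS_neg_iff {n : ℕ} (s : Fin n → Bool) (j : Fin n) : vS s j < 0 ↔ s j = true := by
  unfold vS
  split_ifs with h
  · simp only [h, iff_true]
    omega
  · refine iff_of_false ?_ h
    omega

theorem vS_ne {n : ℕ} (s : Fin n → Bool) (j : Fin n) : vS s j ≠ 0 := by
  intro h
  have := abs_vS s j
  rw [h, abs_zero] at this
  omega

theorem vS_inj {n : ℕ} (s : Fin n → Bool) : Function.Injective (vS s) := by
  intro i j h
  have h1 := abs_vS s i
  have h2 := abs_vS s j
  rw [h] at h1
  ext
  omega

theorem sum_signed {n : ℕ} (F : (Fin n → ℤ) → ℕ) :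
    ∑ w ∈ signedSet n, F w = ∑ s : Fin n → Bool, ∑ σ : Equiv.Perm (Fin n), F (vS s ∘ σ) := by
  rw [← Finset.sum_product']
  symm
  refine Finset.sum_bij (fun p _ => vS p.1 ∘ p.2) ?_ ?_ ?_ ?_
  · rintro ⟨s, σ⟩ _
    rw [mem_signedSet]
    refine ⟨fun i => ?_, fun i j h => ?_⟩
    · simp only [Function.comp_apply, abs_vS]
      have := (σ i).2
      omega
    · simp only [Function.comp_apply, abs_vS] at h
      apply σ.injective
      ext
      omega
  · rintro ⟨s, σ⟩ _ ⟨s', σ'⟩ _ h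
    have hσ : σ = σ' := by
      ext i
      have h1 := congrArg abs (congrFun h i)
      simp only [Function.comp_apply, abs_vS] at h1
      omega
    subst hσ
    have hs : s = s' := by
      funext j
      have h1 := congrFun h (σ.symm j)
      simp only [Function.comp_apply, Equiv.apply_symm_apply] at h1
      rw [Bool.eq_iff_iff, ← vS_neg_iff s j, ← vS_neg_iff s' j, h1]
    rw [hs]
  · intro w hw
    rw [mem_signedSet] at hw
    let e : Fin n → Fin n := fun i => ⟨(|w i| - 1).toNat, by have := hw.1 i; omega⟩
    have he : ∀ i, ((e i : ℕ) : ℤ) + 1 = |w i| := by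
      intro i
      have := hw.1 i
      simp only [e]
      omega
    have hinj : Function.Injective e := by
      intro i j h
      apply hw.2
      show |w i| = |w j|
      rw [← he i, ← he j, h]
    let σ : Equiv.Perm (Fin n) := Equiv.ofBijective e (Finite.injective_iff_bijective.1 hinj)
    refine ⟨⟨fun j => decide (w (σ.symm j) < 0), σ⟩, Finset.mem_univ _, ?_⟩
    ext i
    simp only [Function.comp_apply, vS, Equiv.symm_apply_apply, decide_eq_true_eq]
    have h1 : σ i = e i := rfl
    have h2 := he i
    rw [h1]
    split_ifs with h
    · rw [h2, abs_of_neg h, neg_neg]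
    · rw [h2, abs_of_nonneg (not_lt.1 h)]
  · intro _ _
    rfl

theorem card_wSet_vS {n : ℕ} (s : Fin n → Bool) (m : ℕ) :
    (wSet (vS s) m).card = ∏ j, (if s j then m else m + 1) := by
  have : wSet (vS s) m = Fintype.piFinset
      (fun j => if s j then Finset.Icc (1 : ℤ) m else Finset.Icc 0 m) := by
    ext f
    unfold wSet
    simp only [Finset.mem_filter, Fintype.mem_piFinset, ← forall_and]
    refine forall_congr' fun j => ?_
    rw [vS_neg_iff]
    by_cases h : s j = true
    · rw [if_pos h, Finset.mem_Icc, Finset.mem_Icc]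
      simp only [h, forall_true_left]
      constructor
      · rintro ⟨h1, h2⟩
        omega
      · intro h1
        omega
    · simp [h]
  rw [this, Fintype.card_piFinset]
  refine Finset.prod_congr rfl fun j _ => ?_
  split_ifs
  · simp
  · simp only [Int.card_Icc]
    omega

theorem typeB_count (n m : ℕ) :
    ∑ w ∈ signedSet n, (m + n - desB w).choose n = (2 * m + 1) ^ n := by
  rw [sum_signed]
  rw [Finset.sum_congr rfl fun s _ => (worpitzky (vS s) (vS_inj s) (vS_ne s) m).trans
    (card_wSet_vS s m)]
  have := Finset.prod_univ_sum (fun _ : Fin n => (Finset.univ : Finset Bool))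
    (fun (_ : Fin n) (b : Bool) => if b then m else m + 1)
  rw [Fintype.piFinset_univ] at this
  rw [← this]
  simp only [Fintype.sum_bool, if_true, Finset.prod_const, Finset.card_univ, Fintype.card_fin]
  simp
  congr 1
  omega

/-! ### Tail descents -/

noncomputable def tdes {N : ℕ} (w : Fin (N + 2) → ℤ) : ℕ :=
  ((Finset.range N).filter fun i => bVal w (i + 3) < bVal w (i + 2)).card

theorem desB_split {N : ℕ} (w : Fin (N + 2) → ℤ) :
    desB w = tdes w + (if bVal w 2 < bVal w 1 then 1 else 0) + (if bVal w 1 < 0 then 1 else 0) := by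
  unfold desB tdes
  rw [Finset.card_filter, Finset.card_filter, Finset.sum_range_succ', Finset.sum_range_succ']
  simp [bVal_zero]

theorem desD_split {N : ℕ} (w : Fin (N + 2) → ℤ) :
    desD w = tdes w + (if bVal w 2 < bVal w 1 then 1 else 0)
      + (if bVal w 1 < - bVal w 2 then 1 else 0) := by
  unfold desD tdes
  rw [Finset.card_filter, Finset.card_filter, Finset.sum_range_succ', Finset.sum_range_succ']
  simp

theorem desD_le {n : ℕ} (u : Fin n → ℤ) : desD u ≤ n := by
  unfold desD
  exact (Finset.card_filter_le _ _).trans (by simp)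

/-- flip the sign of the first letter -/
def flip0 {N : ℕ} (w : Fin (N + 2) → ℤ) : Fin (N + 2) → ℤ := Function.update w 0 (- w 0)

theorem bVal_flip_one {N : ℕ} (w : Fin (N + 2) → ℤ) : bVal (flip0 w) 1 = - bVal w 1 := by
  rw [bVal_succ _ 0 (by omega), bVal_succ _ 0 (by omega)]
  simp [flip0]

theorem bVal_flip {N : ℕ} (w : Fin (N + 2) → ℤ) (i : ℕ) (hi : 2 ≤ i) :
    bVal (flip0 w) i = bVal w i := by
  unfold bVal
  split_ifs with h
  · unfold flip0
    rw [Function.update_of_ne]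
    intro e
    have := congrArg Fin.val e
    simp at this
    omega
  · rfl

theorem tdes_flip {N : ℕ} (w : Fin (N + 2) → ℤ) : tdes (flip0 w) = tdes w := by
  unfold tdes
  have h3 : ∀ i : ℕ, bVal (flip0 w) (i + 3) = bVal w (i + 3) := fun i => bVal_flip _ _ (by omega)
  have h2 : ∀ i : ℕ, bVal (flip0 w) (i + 2) = bVal w (i + 2) := fun i => bVal_flip _ _ (by omega)
  simp only [h3, h2]

theorem flip0_flip0 {N : ℕ} (w : Fin (N + 2) → ℤ) : flip0 (flip0 w) = w := by
  unfold flip0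
  simp [Function.update_idem]

theorem abs_flip {N : ℕ} (w : Fin (N + 2) → ℤ) (i : Fin (N + 2)) : |flip0 w i| = |w i| := by
  unfold flip0
  by_cases h : i = 0
  · subst h
    simp
  · rw [Function.update_of_ne h]

theorem flip_signed {N : ℕ} {w : Fin (N + 2) → ℤ} (h : IsSignedPerm w) :
    IsSignedPerm (flip0 w) := by
  unfold IsSignedPerm at *
  simp only [abs_flip]
  exact h

theorem desD_flip {N : ℕ} (w : Fin (N + 2) → ℤ) : desD (flip0 w) = desD w := by
  rw [desD_split, desD_split, tdes_flip, bVal_flip_one, bVal_flip _ _ le_rfl]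
  have h1 : bVal w 2 < - bVal w 1 ↔ bVal w 1 < - bVal w 2 := by omega
  have h2 : - bVal w 1 < - bVal w 2 ↔ bVal w 2 < bVal w 1 := by omega
  simp only [h1, h2]
  exact Nat.add_right_comm _ _ _

theorem flip_even {N : ℕ} {w : Fin (N + 2) → ℤ} (h : w 0 ≠ 0) :
    IsEvenSigned (flip0 w) ↔ ¬ IsEvenSigned w := by
  unfold IsEvenSigned
  rw [Finset.card_filter, Finset.card_filter, Fin.sum_univ_succ,
    Fin.sum_univ_succ (f := fun i => if w i < 0 then 1 else 0)]
  have h1 : ∀ i : Fin (N + 1), flip0 w i.succ = w i.succ := by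
    intro i
    unfold flip0
    rw [Function.update_of_ne (Fin.succ_ne_zero i)]
  have h2 : flip0 w 0 = - w 0 := by simp [flip0]
  simp only [h1, h2]
  rcases lt_or_gt_of_ne h with h3 | h3
  · rw [if_neg (by omega), if_pos h3]
    rw [zero_add, add_comm 1, Nat.even_add_one, not_not]
  · rw [if_pos (by omega), if_neg (by omega)]
    rw [zero_add, add_comm 1, Nat.even_add_one]

theorem signed_ne {n : ℕ} {w : Fin n → ℤ} (h : IsSignedPerm w) (i : Fin n) : w i ≠ 0 := by
  intro e
  have := (h.1 i).1
  rw [e, abs_zero] at this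
  omega

theorem pair_identity {N : ℕ} {w : Fin (N + 2) → ℤ} (h : IsSignedPerm w) (F : ℕ → ℕ) :
    F (desB w) + F (desB (flip0 w)) = F (desD w) + F (tdes w + 1) := by
  rw [desB_split, desB_split, desD_split, tdes_flip, bVal_flip_one, bVal_flip _ _ le_rfl]
  have hx : bVal w 1 ≠ 0 := by
    rw [bVal_succ _ 0 (by omega)]
    exact signed_ne h _
  have hy : bVal w 2 ≠ 0 := by
    rw [bVal_succ _ 1 (by omega)]
    exact signed_ne h _
  have hxy : |bVal w 1| ≠ |bVal w 2| := by
    rw [bVal_succ _ 0 (by omega), bVal_succ _ 1 (by omega)]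
    intro e
    have := h.2 e
    simp at this
  generalize bVal w 1 = x at *
  generalize bVal w 2 = y at *
  have h1 : x ≠ y := by
    rintro rfl
    exact hxy rfl
  have h2 : x ≠ -y := by
    rintro rfl
    exact hxy (abs_neg y)
  clear hxy
  split_ifs <;> first | (exfalso; omega) | ring

theorem sum_flip0 {N : ℕ} (G : (Fin (N + 2) → ℤ) → ℕ) :
    ∑ w ∈ signedSet (N + 2), G (flip0 w) = ∑ w ∈ signedSet (N + 2), G w := by
  refine Finset.sum_bij' (fun w _ => flip0 w) (fun w _ => flip0 w) ?_ ?_ ?_ ?_ ?_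
  · intro w hw
    exact mem_signedSet.2 (flip_signed (mem_signedSet.1 hw))
  · intro w hw
    exact mem_signedSet.2 (flip_signed (mem_signedSet.1 hw))
  · intro w _
    exact flip0_flip0 w
  · intro w _
    exact flip0_flip0 w
  · intro w _
    rfl

theorem B_D_identity (N : ℕ) (F : ℕ → ℕ) :
    2 * ∑ w ∈ signedSet (N + 2), F (desB w)
      = ∑ w ∈ signedSet (N + 2), F (desD w) + ∑ w ∈ signedSet (N + 2), F (tdes w + 1) := by
  rw [two_mul]
  nth_rewrite 2 [← sum_flip0 (fun w => F (desB w))]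
  rw [← Finset.sum_add_distrib, ← Finset.sum_add_distrib]
  exact Finset.sum_congr rfl fun w hw => pair_identity (mem_signedSet.1 hw) F

theorem EulD_eq (n k : ℕ) : EulD n k =
    ((signedSet n).filter fun w => IsEvenSigned w ∧ desD w = k).card := by
  unfold EulD
  refine Nat.subtype_card _ fun w => ?_
  rw [Finset.mem_filter, mem_signedSet]

theorem two_EulD (N k : ℕ) : 2 * EulD (N + 2) k =
    ((signedSet (N + 2)).filter fun w => desD w = k).card := by
  have h1 : ((signedSet (N + 2)).filter fun w => desD w = k)
      = ((signedSet (N + 2)).filter fun w => IsEvenSigned w ∧ desD w = k) ∪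
        ((signedSet (N + 2)).filter fun w => ¬ IsEvenSigned w ∧ desD w = k) := by
    ext w
    simp only [Finset.mem_union, Finset.mem_filter]
    tauto
  rw [h1, Finset.card_union_of_disjoint, EulD_eq, two_mul]
  · congr 1
    refine Finset.card_bij' (fun w _ => flip0 w) (fun w _ => flip0 w) ?_ ?_ ?_ ?_
    · intro w hw
      simp only [Finset.mem_filter, mem_signedSet] at *
      refine ⟨flip_signed hw.1, ?_, ?_⟩
      · rw [flip_even (signed_ne hw.1 _), not_not]
        exact hw.2.1
      · rw [desD_flip]
        exact hw.2.2
    · intro w hw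
      simp only [Finset.mem_filter, mem_signedSet] at *
      refine ⟨flip_signed hw.1, ?_, ?_⟩
      · rw [flip_even (signed_ne hw.1 _)]
        exact hw.2.1
      · rw [desD_flip]
        exact hw.2.2
    · intro w _
      exact flip0_flip0 w
    · intro w _
      exact flip0_flip0 w
  · rw [Finset.disjoint_left]
    intro w hw hw'
    exact (Finset.mem_filter.1 hw').2.1 (Finset.mem_filter.1 hw).2.1

theorem sum_desD (N : ℕ) (F : ℕ → ℕ) :
    ∑ w ∈ signedSet (N + 2), F (desD w)
      = ∑ k ∈ Finset.range (N + 2 + 1), 2 * EulD (N + 2) k * F k := by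
  rw [← Finset.sum_fiberwise_of_maps_to (t := Finset.range (N + 2 + 1)) (g := fun w => desD w)]
  · refine Finset.sum_congr rfl fun k _ => ?_
    rw [two_EulD, Finset.sum_congr rfl (g := fun _ => F k), Finset.sum_const, smul_eq_mul]
    intro w hw
    rw [(Finset.mem_filter.1 hw).2]
  · intro w _
    have := desD_le w
    exact Finset.mem_range.2 (by omega)


/-! ### Tail descents and the classical Eulerian numbers -/

theorem desA_eq {N : ℕ} (τ : Equiv.Perm (Fin (N + 1))) (u : Fin (N + 1) → ℤ) (hu : StrictMono u) :
    desA τ = ((Finset.range N).filter fun i =>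
      bVal (u ∘ τ) (i + 2) < bVal (u ∘ τ) (i + 1)).card := by
  unfold desA
  rw [Nat.add_sub_cancel]
  congr 1
  refine Finset.filter_congr fun i hi => ?_
  have hi' := Finset.mem_range.1 hi
  rw [bVal_succ _ (i + 1) (by omega), bVal_succ _ i (by omega)]
  simp only [Function.comp_apply, hu.lt_iff_lt]
  exact ⟨fun ⟨_, h⟩ => h, fun h => ⟨by omega, h⟩⟩

theorem desA_le {N : ℕ} (τ : Equiv.Perm (Fin (N + 1))) : desA τ ≤ N := by
  unfold desA
  exact (Finset.card_filter_le _ _).trans (by simp)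

theorem tdes_comp {N : ℕ} (v : Fin (N + 2) → ℤ) (σ : Equiv.Perm (Fin (N + 2))) :
    tdes (v ∘ σ) = ((Finset.range N).filter fun i =>
      bVal (fun j : Fin (N + 1) => v (σ j.succ)) (i + 2)
        < bVal (fun j : Fin (N + 1) => v (σ j.succ)) (i + 1)).card := by
  unfold tdes
  congr 1
  refine Finset.filter_congr fun i hi => ?_
  have hi' := Finset.mem_range.1 hi
  rw [bVal_succ _ (i + 2) (by omega), bVal_succ _ (i + 1) (by omega),
    bVal_succ _ (i + 1) (by omega), bVal_succ _ i (by omega)]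
  rfl

theorem sum_tdes_perm {N : ℕ} (v : Fin (N + 2) → ℤ) (hv : Function.Injective v) (F : ℕ → ℕ) :
    ∑ σ : Equiv.Perm (Fin (N + 2)), F (tdes (v ∘ σ))
      = (N + 2) * ∑ τ : Equiv.Perm (Fin (N + 1)), F (desA τ) := by
  rw [← Equiv.sum_comp (Equiv.Perm.decomposeFin (n := N + 1)).symm]
  rw [Fintype.sum_prod_type]
  have key : ∀ p : Fin (N + 2), ∑ τ : Equiv.Perm (Fin (N + 1)),
      F (tdes (v ∘ (Equiv.Perm.decomposeFin.symm (p, τ) : Equiv.Perm (Fin (N + 2)))))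
      = ∑ τ : Equiv.Perm (Fin (N + 1)), F (desA τ) := by
    intro p
    let v' : Fin (N + 1) → ℤ := fun j => v (Equiv.swap 0 p j.succ)
    have hv' : Function.Injective v' := by
      intro i j h
      exact Fin.succ_injective _ ((Equiv.swap 0 p).injective (hv h))
    let ρ := Tuple.sort v'
    have hs : StrictMono (v' ∘ ρ) :=
      (Tuple.monotone_sort v').strictMono_of_injective (hv'.comp ρ.injective)
    rw [← Equiv.sum_comp (Equiv.mulLeft ρ)]
    refine Finset.sum_congr rfl fun τ _ => ?_
    rw [desA_eq τ (v' ∘ ρ) hs, tdes_comp]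
    simp only [Equiv.Perm.decomposeFin_symm_apply_succ]
    rfl
  rw [Finset.sum_congr rfl fun p _ => key p]
  simp

theorem sum_tdes (N : ℕ) (F : ℕ → ℕ) :
    ∑ w ∈ signedSet (N + 2), F (tdes w)
      = 2 ^ (N + 2) * ((N + 2) * ∑ τ : Equiv.Perm (Fin (N + 1)), F (desA τ)) := by
  rw [sum_signed (fun w => F (tdes w)), Finset.sum_congr rfl fun s _ => sum_tdes_perm _ (vS_inj s) F]
  simp

theorem typeA_count (N m : ℕ) :
    ∑ τ : Equiv.Perm (Fin (N + 1)), (m + N - desA τ).choose (N + 1) = m ^ (N + 1) := by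
  let v : Fin (N + 1) → ℤ := fun j => (j : ℕ) - ((N : ℤ) + 1)
  have hneg : ∀ j, v j < 0 := by
    intro j
    have := j.2
    simp only [v]
    omega
  have hmono : StrictMono v := by
    intro i j h
    have := Fin.lt_def.1 h
    simp only [v]
    omega
  have hd : ∀ τ : Equiv.Perm (Fin (N + 1)), desB (v ∘ τ) = desA τ + 1 := by
    intro τ
    rw [desA_eq τ v hmono]
    unfold desB
    rw [Finset.card_filter, Finset.card_filter, Finset.sum_range_succ']
    congr 1
    rw [if_pos]
    rw [bVal_zero, bVal_succ _ 0 (by omega)]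
    exact hneg _
  have hw := worpitzky v hmono.injective (fun i => (hneg i).ne) m
  have hc : (wSet v m).card = m ^ (N + 1) := by
    have : wSet v m = Fintype.piFinset (fun _ => Finset.Icc (1 : ℤ) m) := by
      ext f
      unfold wSet
      simp only [Finset.mem_filter, Fintype.mem_piFinset, ← forall_and]
      refine forall_congr' fun j => ?_
      rw [Finset.mem_Icc, Finset.mem_Icc]
      simp only [hneg j, forall_true_left]
      constructor
      · rintro ⟨h1, h2⟩
        omega
      · intro h1
        omega
    rw [this, Fintype.card_piFinset]
    simp
  rw [← hc, ← hw]
  refine Finset.sum_congr rfl fun τ _ => ?_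
  rw [hd]
  congr 1
  omega

theorem sum_EulA (N : ℕ) (F : ℕ → ℕ) :
    ∑ τ : Equiv.Perm (Fin (N + 1)), F (desA τ + 2)
      = ∑ k ∈ Finset.range (N + 2 + 1), EulA (N + 1) (k - 1) * F k := by
  rw [← Finset.sum_fiberwise_of_maps_to (t := Finset.range (N + 2 + 1)) (g := fun τ => desA τ + 2)]
  · refine Finset.sum_congr rfl fun k _ => ?_
    rw [Finset.sum_congr rfl (g := fun _ => F k), Finset.sum_const, smul_eq_mul]
    · congr 1
      unfold EulA
      split_ifs with h
      · rw [Finset.card_eq_zero, Finset.filter_eq_empty_iff]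
        intro τ _
        omega
      · symm
        refine Nat.subtype_card _ fun τ => ?_
        simp only [Finset.mem_filter, Finset.mem_univ, true_and]
        omega
    · intro w hw
      rw [(Finset.mem_filter.1 hw).2]
  · intro w _
    have := desA_le w
    exact Finset.mem_range.2 (by omega)

theorem eulerian_side (N m : ℕ) :
    ∑ k ∈ Finset.range (N + 2 + 1), (EulD (N + 2) k + (N + 2) * 2 ^ (N + 1) * EulA (N + 1) (k - 1))
        * (m + (N + 2) - k).choose (N + 2)
      + (N + 2) * (2 * m) ^ (N + 1) = (2 * m + 1) ^ (N + 2) := by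
  have h1 := B_D_identity N (fun d => (m + (N + 2) - d).choose (N + 2))
  rw [typeB_count, sum_desD N (fun d => (m + (N + 2) - d).choose (N + 2)),
    sum_tdes N (fun d => (m + (N + 2) - (d + 1)).choose (N + 2))] at h1
  have h2 : ∀ τ : Equiv.Perm (Fin (N + 1)), (m + (N + 2) - (desA τ + 1)).choose (N + 2)
      = (m + N - desA τ).choose (N + 1) + (m + (N + 2) - (desA τ + 2)).choose (N + 2) := by
    intro τ
    have := desA_le τ
    have e1 : m + (N + 2) - (desA τ + 1) = (m + N - desA τ) + 1 := by omega
    have e2 : m + (N + 2) - (desA τ + 2) = m + N - desA τ := by omega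
    rw [e1, e2, Nat.choose_succ_succ]
  rw [Finset.sum_congr rfl fun τ _ => h2 τ, Finset.sum_add_distrib, typeA_count,
    sum_EulA N (fun d => (m + (N + 2) - d).choose (N + 2))] at h1
  simp only [add_mul, Finset.sum_add_distrib]
  simp only [mul_assoc] at h1 ⊢
  simp only [← Finset.mul_sum] at h1 ⊢
  have e : (2 : ℕ) ^ (N + 2) = 2 * 2 ^ (N + 1) := by ring
  rw [e] at h1
  have e2 : (2 * m) ^ (N + 1) = 2 ^ (N + 1) * m ^ (N + 1) := mul_pow _ _ _
  rw [e2]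
  nlinarith


/-! ### Partitions -/

noncomputable def gnd (n : ℕ) : Finset ℤ := (Finset.Icc (-(n : ℤ)) n).erase 0

theorem mem_gnd {n : ℕ} {x : ℤ} : x ∈ gnd n ↔ (x ≠ 0 ∧ |x| ≤ (n : ℤ)) := by
  unfold gnd
  rw [Finset.mem_erase, Finset.mem_Icc, abs_le]

theorem neg_mem_gnd {n : ℕ} {x : ℤ} : -x ∈ gnd n ↔ x ∈ gnd n := by
  rw [mem_gnd, mem_gnd, abs_neg, neg_ne_zero]

theorem mem_negSet {C : Finset ℤ} {x : ℤ} : x ∈ negSet C ↔ -x ∈ C := by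
  unfold negSet
  rw [Finset.mem_image]
  constructor
  · rintro ⟨y, hy, rfl⟩
    rwa [neg_neg]
  · intro h
    exact ⟨-x, h, neg_neg x⟩

theorem negSet_negSet (C : Finset ℤ) : negSet (negSet C) = C := by
  ext x
  rw [mem_negSet, mem_negSet, neg_neg]

theorem BPartition.ext' {n : ℕ} {P Q : BPartition n} (h : P.blocks = Q.blocks) : P = Q := by
  cases P
  cases Q
  simp only at h
  subst h
  rfl

theorem block_sub {n : ℕ} (P : BPartition n) {C : Finset ℤ} (hC : C ∈ P.blocks) : C ⊆ gnd n := by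
  intro x hx
  rw [mem_gnd]
  exact (P.cover x).2 ⟨C, hC, hx⟩

theorem block_unique {n : ℕ} (P : BPartition n) {C C' : Finset ℤ} (hC : C ∈ P.blocks)
    (hC' : C' ∈ P.blocks) {x : ℤ} (hx : x ∈ C) (hx' : x ∈ C') : C = C' := by
  by_contra hne
  exact Finset.disjoint_left.1 (P.disj C hC C' hC' hne) hx hx'

instance BPartition.finite (n : ℕ) : Finite (BPartition n) := by
  refine Finite.of_injective
    (fun P : BPartition n => (⟨P.blocks, ?_⟩ : ↥((gnd n).powerset.powerset))) ?_
  · rw [Finset.mem_powerset]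
    intro C hC
    rw [Finset.mem_powerset]
    exact block_sub P hC
  · intro P Q h
    apply BPartition.ext'
    simpa using h

noncomputable instance BPartition.fintype (n : ℕ) : Fintype (BPartition n) := Fintype.ofFinite _

/-- the relation of lying in the same block -/
def sameB {n : ℕ} (P : BPartition n) (x y : ℤ) : Prop := ∃ C ∈ P.blocks, x ∈ C ∧ y ∈ C

theorem sameB_ext {n : ℕ} {P Q : BPartition n} (h : ∀ x y, sameB P x y ↔ sameB Q x y) : P = Q := by
  have key : ∀ {P Q : BPartition n}, (∀ x y, sameB P x y ↔ sameB Q x y) →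
      ∀ C ∈ P.blocks, C ∈ Q.blocks := by
    intro P Q h C hC
    obtain ⟨x, hx⟩ := P.nonempty C hC
    obtain ⟨C', hC', hx', _⟩ := (h x x).1 ⟨C, hC, hx, hx⟩
    have : C = C' := by
      ext y
      constructor
      · intro hy
        obtain ⟨D, hD, h1, h2⟩ := (h x y).1 ⟨C, hC, hx, hy⟩
        rwa [block_unique Q hC' hD hx' h1]
      · intro hy
        obtain ⟨D, hD, h1, h2⟩ := (h x y).2 ⟨C', hC', hx', hy⟩
        rwa [block_unique P hC hD hx h1]
    rwa [this]
  apply BPartition.ext'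
  ext C
  exact ⟨key h C, key (fun x y => (h x y).symm) C⟩

/-- odd extension -/
def oddExt {n : ℕ} (f : Fin n → ℤ) (x : ℤ) : ℤ := bVal f x.toNat - bVal f (-x).toNat

theorem oddExt_neg {n : ℕ} (f : Fin n → ℤ) (x : ℤ) : oddExt f (-x) = - oddExt f x := by
  unfold oddExt
  rw [neg_neg]
  ring

theorem oddExt_pos {n : ℕ} (f : Fin n → ℤ) (i : Fin n) : oddExt f ((i : ℕ) + 1) = f i := by
  unfold oddExt
  have h1 : (((i : ℕ) : ℤ) + 1).toNat = i.1 + 1 := by omega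
  have h2 : (-(((i : ℕ) : ℤ) + 1)).toNat = 0 := by omega
  rw [h1, h2, bVal_zero, bVal_succ _ _ i.2, sub_zero]

theorem pos_gnd {n : ℕ} {x : ℤ} (hx : x ∈ gnd n) (h0 : 0 < x) :
    ∃ i : Fin n, x = (i : ℕ) + 1 := by
  rw [mem_gnd, abs_le] at hx
  exact ⟨⟨x.toNat - 1, by omega⟩, by simp only; omega⟩

theorem gnd_pos {n : ℕ} (i : Fin n) : (((i : ℕ) : ℤ) + 1) ∈ gnd n := by
  rw [mem_gnd, abs_le]
  have := i.2
  omega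

noncomputable def cls {n : ℕ} (f : Fin n → ℤ) (x : ℤ) : Finset ℤ :=
  (gnd n).filter fun y => oddExt f y = oddExt f x

theorem negSet_cls {n : ℕ} (f : Fin n → ℤ) (x : ℤ) : negSet (cls f x) = cls f (-x) := by
  ext y
  unfold cls
  rw [mem_negSet, Finset.mem_filter, Finset.mem_filter, neg_mem_gnd, oddExt_neg, oddExt_neg]
  refine and_congr_right fun _ => ?_
  constructor <;> intro h <;> omega

theorem cls_selfneg {n : ℕ} {f : Fin n → ℤ} {x : ℤ} (hx : x ∈ gnd n)
    (h : negSet (cls f x) = cls f x) : oddExt f x = 0 := by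
  rw [negSet_cls] at h
  have h1 : x ∈ cls f x := Finset.mem_filter.2 ⟨hx, rfl⟩
  rw [← h] at h1
  have h2 := (Finset.mem_filter.1 h1).2
  rw [oddExt_neg] at h2
  omega

theorem cls_congr {n : ℕ} {f : Fin n → ℤ} {x y : ℤ} (h : oddExt f x = oddExt f y) :
    cls f x = cls f y := by
  unfold cls
  rw [h]

noncomputable def kerP {n : ℕ} (f : Fin n → ℤ) : BPartition n where
  blocks := (gnd n).image (cls f)
  cover := by
    intro x
    rw [← mem_gnd]
    constructor
    · intro hx
      exact ⟨cls f x, Finset.mem_image_of_mem _ hx, Finset.mem_filter.2 ⟨hx, rfl⟩⟩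
    · rintro ⟨C, hC, hx⟩
      obtain ⟨y, hy, rfl⟩ := Finset.mem_image.1 hC
      exact (Finset.mem_filter.1 hx).1
  nonempty := by
    intro C hC
    obtain ⟨y, hy, rfl⟩ := Finset.mem_image.1 hC
    exact ⟨y, Finset.mem_filter.2 ⟨hy, rfl⟩⟩
  disj := by
    intro C hC C' hC' hne
    obtain ⟨y, hy, rfl⟩ := Finset.mem_image.1 hC
    obtain ⟨z, hz, rfl⟩ := Finset.mem_image.1 hC'
    rw [Finset.disjoint_left]
    intro x hx hx'
    apply hne
    apply cls_congr
    rw [← (Finset.mem_filter.1 hx).2, (Finset.mem_filter.1 hx').2]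
  closed := by
    intro C hC
    obtain ⟨y, hy, rfl⟩ := Finset.mem_image.1 hC
    rw [negSet_cls]
    exact Finset.mem_image_of_mem _ (neg_mem_gnd.2 hy)
  zeroUnique := by
    intro C hC C' hC' h h'
    obtain ⟨y, hy, rfl⟩ := Finset.mem_image.1 hC
    obtain ⟨z, hz, rfl⟩ := Finset.mem_image.1 hC'
    apply cls_congr
    rw [cls_selfneg hy h, cls_selfneg hz h']

theorem sameB_kerP {n : ℕ} (f : Fin n → ℤ) (x y : ℤ) :
    sameB (kerP f) x y ↔ x ∈ gnd n ∧ y ∈ gnd n ∧ oddExt f x = oddExt f y := by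
  constructor
  · rintro ⟨C, hC, hx, hy⟩
    obtain ⟨z, hz, rfl⟩ := Finset.mem_image.1 hC
    have h1 := Finset.mem_filter.1 hx
    have h2 := Finset.mem_filter.1 hy
    exact ⟨h1.1, h2.1, h1.2.trans h2.2.symm⟩
  · rintro ⟨hx, hy, h⟩
    exact ⟨cls f x, Finset.mem_image_of_mem _ hx, Finset.mem_filter.2 ⟨hx, rfl⟩,
      Finset.mem_filter.2 ⟨hy, h.symm⟩⟩

noncomputable def zeros {n : ℕ} (f : Fin n → ℤ) : Finset (Fin n) :=
  Finset.univ.filter fun i => f i = 0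

theorem card_pos_cls {n : ℕ} (f : Fin n → ℤ) (x : ℤ) (hx : oddExt f x = 0) :
    ((cls f x).filter fun y => 0 < y).card = (zeros f).card := by
  symm
  refine Finset.card_bij (fun i _ => ((i : ℕ) : ℤ) + 1) ?_ ?_ ?_
  · intro i hi
    unfold cls
    rw [Finset.mem_filter, Finset.mem_filter, oddExt_pos, hx]
    exact ⟨⟨gnd_pos i, (Finset.mem_filter.1 hi).2⟩, by omega⟩
  · intro i _ j _ h
    ext
    omega
  · intro y hy
    unfold cls at hy
    rw [Finset.mem_filter, Finset.mem_filter, hx] at hy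
    obtain ⟨i, rfl⟩ := pos_gnd hy.1.1 hy.2
    rw [oddExt_pos] at hy
    exact ⟨i, Finset.mem_filter.2 ⟨Finset.mem_univ _, hy.1.2⟩, rfl⟩

theorem isD_kerP {n : ℕ} (f : Fin n → ℤ) : IsDPartition (kerP f) ↔ (zeros f).card ≠ 1 := by
  constructor
  · intro h h1
    obtain ⟨i, hi⟩ := Finset.card_pos.1 (by omega : 0 < (zeros f).card)
    have hf : oddExt f ((i : ℕ) + 1) = 0 := by
      rw [oddExt_pos]
      exact (Finset.mem_filter.1 hi).2
    have := h (cls f ((i : ℕ) + 1)) (Finset.mem_image_of_mem _ (gnd_pos i)) (by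
      rw [negSet_cls]
      apply cls_congr
      rw [oddExt_neg, hf, neg_zero])
    rw [card_pos_cls f _ hf] at this
    omega
  · intro h C hC hneg
    obtain ⟨x, hx, rfl⟩ := Finset.mem_image.1 hC
    have h0 := cls_selfneg hx hneg
    have hpos : 0 < ((cls f x).filter fun y => 0 < y).card := by
      rw [Finset.card_pos]
      have hx0 := (mem_gnd.1 hx).1
      rcases lt_or_gt_of_ne hx0 with h1 | h1
      · refine ⟨-x, Finset.mem_filter.2 ⟨Finset.mem_filter.2 ⟨neg_mem_gnd.2 hx, ?_⟩, by omega⟩⟩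
        rw [oddExt_neg, h0, neg_zero]
      · exact ⟨x, Finset.mem_filter.2 ⟨Finset.mem_filter.2 ⟨hx, rfl⟩, h1⟩⟩
    have := card_pos_cls f x h0
    omega

/-! ### Representatives of pairs of blocks -/

def mx (C : Finset ℤ) : ℕ := C.sup Int.toNat

theorem mx_mem {C : Finset ℤ} (h : 0 < mx C) : ((mx C : ℕ) : ℤ) ∈ C := by
  have hne : C.Nonempty := by
    by_contra hn
    rw [Finset.not_nonempty_iff_eq_empty] at hn
    subst hn
    simp [mx] at h
  obtain ⟨x, hx, he⟩ := Finset.exists_mem_eq_sup C hne Int.toNat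
  have : mx C = x.toNat := he
  have e : ((mx C : ℕ) : ℤ) = x := by omega
  rwa [e]

theorem le_mx {C : Finset ℤ} {x : ℤ} (h : x ∈ C) : x.toNat ≤ mx C := Finset.le_sup (f := Int.toNat) h

noncomputable def reps {n : ℕ} (P : BPartition n) : Finset (Finset ℤ) :=
  P.blocks.filter fun C => mx (negSet C) < mx C

theorem reps_block {n : ℕ} {P : BPartition n} {C : Finset ℤ} (h : C ∈ reps P) : C ∈ P.blocks :=
  (Finset.mem_filter.1 h).1

theorem reps_not_neg {n : ℕ} {P : BPartition n} {C : Finset ℤ} (h : C ∈ reps P) :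
    negSet C ∉ reps P := by
  intro h'
  have h1 := (Finset.mem_filter.1 h).2
  have h2 := (Finset.mem_filter.1 h').2
  rw [negSet_negSet] at h2
  omega

theorem reps_ne {n : ℕ} {P : BPartition n} {C : Finset ℤ} (h : C ∈ reps P) : negSet C ≠ C := by
  intro e
  have := reps_not_neg h
  rw [e] at this
  exact this h

theorem reps_mx {n : ℕ} {P : BPartition n} {C : Finset ℤ} (h : C ∈ reps P) :
    ((mx C : ℕ) : ℤ) ∈ C := mx_mem (by have := (Finset.mem_filter.1 h).2; omega)

theorem reps_or {n : ℕ} {P : BPartition n} {C : Finset ℤ} (h : C ∈ P.blocks) (hne : negSet C ≠ C) :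
    C ∈ reps P ∨ negSet C ∈ reps P := by
  have h' := P.closed C h
  rcases lt_trichotomy (mx (negSet C)) (mx C) with h1 | h1 | h1
  · exact Or.inl (Finset.mem_filter.2 ⟨h, h1⟩)
  · exfalso
    by_cases h0 : 0 < mx C
    · have a := mx_mem h0
      have b := mx_mem (h1.symm ▸ h0)
      rw [h1] at b
      exact hne (block_unique P h' h b a)
    · obtain ⟨x, hx⟩ := P.nonempty C h
      have a := le_mx hx
      have b := le_mx (mem_negSet.2 ((neg_neg x).symm ▸ hx) : -x ∈ negSet C)
      have c := (mem_gnd.1 (block_sub P h hx)).1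
      omega
  · refine Or.inr (Finset.mem_filter.2 ⟨h', ?_⟩)
    rwa [negSet_negSet]

theorem card_nonzero {n : ℕ} (P : BPartition n) :
    (P.blocks.filter fun C => negSet C ≠ C).card = 2 * (reps P).card := by
  have : (P.blocks.filter fun C => negSet C ≠ C) = reps P ∪ (reps P).image negSet := by
    ext C
    rw [Finset.mem_filter, Finset.mem_union, Finset.mem_image]
    constructor
    · rintro ⟨h, hne⟩
      rcases reps_or h hne with h1 | h1
      · exact Or.inl h1
      · exact Or.inr ⟨_, h1, negSet_negSet C⟩
    · rintro (h | ⟨D, h, rfl⟩)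
      · exact ⟨reps_block h, reps_ne h⟩
      · exact ⟨P.closed _ (reps_block h), by rw [negSet_negSet]; exact (reps_ne h).symm⟩
  rw [this, Finset.card_union_of_disjoint, Finset.card_image_of_injective, two_mul]
  · intro C D h
    rw [← negSet_negSet C, h, negSet_negSet]
  · rw [Finset.disjoint_left]
    intro C hC hC'
    obtain ⟨D, hD, rfl⟩ := Finset.mem_image.1 hC'
    exact reps_not_neg hD hC

theorem hasPairs_iff {n : ℕ} (P : BPartition n) (r : ℕ) : hasPairs P r ↔ (reps P).card = r := by
  unfold hasPairs
  rw [card_nonzero]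
  omega

theorem card_reps_le {n : ℕ} (P : BPartition n) : (reps P).card ≤ n := by
  have : (reps P).card ≤ (Finset.Icc 1 n).card := by
    refine Finset.card_le_card_of_injOn mx ?_ ?_
    · intro C hC
      have h1 := reps_mx hC
      have h2 := mem_gnd.1 (block_sub P (reps_block hC) h1)
      rw [abs_le] at h2
      rw [Finset.mem_coe, Finset.mem_Icc]
      omega
    · intro C hC D hD h
      have h1 := reps_mx hC
      have h2 := reps_mx hD
      rw [← h] at h2
      exact block_unique P (reps_block hC) (reps_block hD) h1 h2
  simpa using this

/-! ### Labelings -/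

noncomputable def labels (ι : Type) [Fintype ι] (m : ℕ) : Finset (ι → ℤ) :=
  (Fintype.piFinset fun _ => Finset.Icc (-(m : ℤ)) m).filter fun y =>
    (∀ i, y i ≠ 0) ∧ Function.Injective fun i => |y i|

theorem card_labels (ι : Type) [Fintype ι] (m : ℕ) :
    (labels ι m).card = 2 ^ Fintype.card ι * m.descFactorial (Fintype.card ι) := by
  have e : 2 ^ Fintype.card ι * m.descFactorial (Fintype.card ι)
      = (Finset.univ : Finset ((ι → Bool) × (ι ↪ Fin m))).card := by
    rw [Finset.card_univ, Fintype.card_prod, Fintype.card_embedding_eq]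
    simp
  rw [e]
  symm
  let φ : (ι → Bool) × (ι ↪ Fin m) → ι → ℤ := fun p i =>
    if p.1 i then -(((p.2 i : ℕ) : ℤ) + 1) else ((p.2 i : ℕ) : ℤ) + 1
  have hφ : ∀ p i, |φ p i| = ((p.2 i : ℕ) : ℤ) + 1 := by
    intro p i
    simp only [φ]
    split_ifs
    · rw [abs_neg, abs_of_nonneg (by positivity)]
    · rw [abs_of_nonneg (by positivity)]
  have hφs : ∀ p i, φ p i < 0 ↔ p.1 i = true := by
    intro p i
    simp only [φ]
    split_ifs with h
    · simp only [h, iff_true]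
      omega
    · refine iff_of_false ?_ h
      omega
  refine Finset.card_bij (fun p _ => φ p) ?_ ?_ ?_
  · intro p _
    unfold labels
    simp only [Finset.mem_filter, Fintype.mem_piFinset, Finset.mem_Icc]
    refine ⟨fun i => abs_le.1 ?_, fun i h => ?_, fun i j h => ?_⟩
    · rw [hφ]
      have := (p.2 i).2
      omega
    · have := hφ p i
      rw [h, abs_zero] at this
      omega
    · simp only [hφ] at h
      apply p.2.injective
      ext
      omega
  · intro p _ q _ h
    refine Prod.ext ?_ ?_
    · funext i
      rw [Bool.eq_iff_iff, ← hφs, ← hφs, h]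
    · ext i
      have h1 := hφ p i
      rw [h, hφ] at h1
      omega
  · intro y hy
    unfold labels at hy
    simp only [Finset.mem_filter, Fintype.mem_piFinset, Finset.mem_Icc] at hy
    obtain ⟨h1, h2, h3⟩ := hy
    have h4 : ∀ i, 1 ≤ |y i| ∧ |y i| ≤ m := fun i =>
      ⟨Int.one_le_abs (h2 i), abs_le.2 (h1 i)⟩
    have hinj : Function.Injective
        (fun i => (⟨(|y i| - 1).toNat, by have := h4 i; omega⟩ : Fin m)) := by
      intro i j h
      apply h3
      rw [Fin.mk.injEq] at h
      have := h4 i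
      have := h4 j
      show |y i| = |y j|
      omega
    obtain ⟨E, hE⟩ : ∃ E : ι ↪ Fin m, ∀ i, ((E i : ℕ) : ℤ) + 1 = |y i| := by
      refine ⟨⟨_, hinj⟩, fun i => ?_⟩
      have := h4 i
      show (((|y i| - 1).toNat : ℕ) : ℤ) + 1 = |y i|
      omega
    refine ⟨⟨fun i => decide (y i < 0), E⟩, Finset.mem_univ _, ?_⟩
    funext i
    simp only [φ, decide_eq_true_eq, hE]
    split_ifs with h
    · rw [abs_of_neg h, neg_neg]
    · rw [abs_of_nonneg (not_lt.1 h)]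


/-! ### The fibre over a partition -/

noncomputable def fbox (n m : ℕ) : Finset (Fin n → ℤ) :=
  Fintype.piFinset fun _ => Finset.Icc (-(m : ℤ)) m

/-- value of a block under a labeling of the representatives -/
noncomputable def bv {n : ℕ} {P : BPartition n} (y : {C // C ∈ reps P} → ℤ) (C : Finset ℤ) : ℤ :=
  if h : C ∈ reps P then y ⟨C, h⟩ else if h : negSet C ∈ reps P then - y ⟨negSet C, h⟩ else 0

theorem bv_pos {n : ℕ} {P : BPartition n} (y : {C // C ∈ reps P} → ℤ) {C : Finset ℤ}
    (h : C ∈ reps P) : bv y C = y ⟨C, h⟩ := by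
  unfold bv
  rw [dif_pos h]

theorem bv_neg {n : ℕ} {P : BPartition n} (y : {C // C ∈ reps P} → ℤ) (C : Finset ℤ) :
    bv y (negSet C) = - bv y C := by
  unfold bv
  by_cases h : C ∈ reps P
  · rw [dif_neg (reps_not_neg h), dif_pos h]
    have h' : negSet (negSet C) ∈ reps P := by rwa [negSet_negSet]
    rw [dif_pos h']
    simp only [negSet_negSet]
  · by_cases h1 : negSet C ∈ reps P
    · rw [dif_pos h1, dif_neg h, dif_pos h1, neg_neg]
    · have h' : negSet (negSet C) ∉ reps P := by rwa [negSet_negSet]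
      rw [dif_neg h1, dif_neg h, dif_neg h1, dif_neg h', neg_zero]

theorem bv_abs {n : ℕ} {P : BPartition n} {m : ℕ} {y : {C // C ∈ reps P} → ℤ}
    (hy : y ∈ labels _ m) (C : Finset ℤ) : |bv y C| ≤ m := by
  unfold labels at hy
  simp only [Finset.mem_filter, Fintype.mem_piFinset, Finset.mem_Icc] at hy
  unfold bv
  split_ifs
  · exact abs_le.2 (hy.1 _)
  · rw [abs_neg]
    exact abs_le.2 (hy.1 _)
  · simp

theorem bv_inj_pos {n : ℕ} {P : BPartition n} {m : ℕ} {y : {C // C ∈ reps P} → ℤ}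
    (hy : y ∈ labels _ m) {C D : Finset ℤ} (hC : C ∈ reps P) (hD : D ∈ P.blocks)
    (h : bv y C = bv y D) : C = D := by
  unfold labels at hy
  simp only [Finset.mem_filter, Fintype.mem_piFinset, Finset.mem_Icc] at hy
  obtain ⟨-, h0, hinj⟩ := hy
  rw [bv_pos y hC] at h
  unfold bv at h
  split_ifs at h with h1 h2
  · have := hinj (congrArg abs h)
    exact congrArg Subtype.val this
  · exfalso
    have h3 := hinj (a₁ := ⟨C, hC⟩) (a₂ := ⟨negSet D, h2⟩) (by
      show |y _| = |y _|
      rw [h, abs_neg])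
    rw [← h3] at h
    have := h0 ⟨C, hC⟩
    omega
  · exact absurd h (h0 _)

theorem bv_inj {n : ℕ} {P : BPartition n} {m : ℕ} {y : {C // C ∈ reps P} → ℤ}
    (hy : y ∈ labels _ m) {C D : Finset ℤ} (hC : C ∈ P.blocks) (hD : D ∈ P.blocks)
    (h : bv y C = bv y D) : C = D := by
  have neg_inj' : ∀ {A B : Finset ℤ}, negSet A = negSet B → A = B := by
    intro A B e
    rw [← negSet_negSet A, e, negSet_negSet]
  by_cases h1 : C ∈ reps P
  · exact bv_inj_pos hy h1 hD h
  by_cases h2 : negSet C ∈ reps P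
  · exact neg_inj' (bv_inj_pos hy h2 (P.closed D hD) (by rw [bv_neg, bv_neg, h]))
  by_cases h3 : D ∈ reps P
  · exact (bv_inj_pos hy h3 hC h.symm).symm
  by_cases h4 : negSet D ∈ reps P
  · exact (neg_inj' (bv_inj_pos hy h4 (P.closed C hC) (by rw [bv_neg, bv_neg, h]))).symm
  have hc : negSet C = C := by
    by_contra hne
    rcases reps_or hC hne with h | h
    · exact h1 h
    · exact h2 h
  have hd : negSet D = D := by
    by_contra hne
    rcases reps_or hD hne with h | h
    · exact h3 h
    · exact h4 h
  exact P.zeroUnique C hC D hD hc hd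

theorem exists_block {n : ℕ} (P : BPartition n) (x : ℤ) :
    ∃ C : Finset ℤ, x ∈ gnd n → (C ∈ P.blocks ∧ x ∈ C) := by
  by_cases h : x ∈ gnd n
  · obtain ⟨C, hC, hx⟩ := (P.cover x).1 (mem_gnd.1 h)
    exact ⟨C, fun _ => ⟨hC, hx⟩⟩
  · exact ⟨∅, fun h' => absurd h' h⟩

noncomputable def blockOf {n : ℕ} (P : BPartition n) (x : ℤ) : Finset ℤ :=
  Classical.choose (exists_block P x)

theorem blockOf_spec {n : ℕ} (P : BPartition n) {x : ℤ} (h : x ∈ gnd n) :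
    blockOf P x ∈ P.blocks ∧ x ∈ blockOf P x := Classical.choose_spec (exists_block P x) h

theorem blockOf_eq {n : ℕ} (P : BPartition n) {x : ℤ} {C : Finset ℤ} (hC : C ∈ P.blocks)
    (hx : x ∈ C) : blockOf P x = C := by
  have h := blockOf_spec P (block_sub P hC hx)
  exact block_unique P h.1 hC h.2 hx

theorem blockOf_neg {n : ℕ} (P : BPartition n) {x : ℤ} (h : x ∈ gnd n) :
    blockOf P (-x) = negSet (blockOf P x) := by
  have h1 := blockOf_spec P h
  refine blockOf_eq P (P.closed _ h1.1) (mem_negSet.2 ?_)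
  rw [neg_neg]
  exact h1.2

/-- function of a labeling -/
noncomputable def funOf {n : ℕ} {P : BPartition n} (y : {C // C ∈ reps P} → ℤ) : Fin n → ℤ :=
  fun i => bv y (blockOf P ((i : ℕ) + 1))

/-- labeling of a function -/
noncomputable def labOf {n : ℕ} (P : BPartition n) (f : Fin n → ℤ) : {C // C ∈ reps P} → ℤ :=
  fun C => oddExt f (mx C.1)

theorem oddExt_eq_of_pos {n : ℕ} (f : Fin n → ℤ) (g : ℤ → ℤ)
    (hg : ∀ x ∈ gnd n, g (-x) = - g x) (h : ∀ i : Fin n, f i = g ((i : ℕ) + 1)) :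
    ∀ x ∈ gnd n, oddExt f x = g x := by
  intro x hx
  rcases lt_or_gt_of_ne (mem_gnd.1 hx).1 with h0 | h0
  · obtain ⟨i, hi⟩ := pos_gnd (neg_mem_gnd.2 hx) (by omega : 0 < -x)
    have h1 := oddExt_neg f x
    rw [hi, oddExt_pos, h i, ← hi, hg x hx] at h1
    omega
  · obtain ⟨i, rfl⟩ := pos_gnd hx h0
    rw [oddExt_pos, h i]

theorem oddExt_funOf {n : ℕ} {P : BPartition n} (y : {C // C ∈ reps P} → ℤ) {x : ℤ}
    (hx : x ∈ gnd n) : oddExt (funOf y) x = bv y (blockOf P x) := by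
  refine oddExt_eq_of_pos (funOf y) (fun x => bv y (blockOf P x)) ?_ (fun i => rfl) x hx
  intro x hx
  rw [blockOf_neg P hx, bv_neg]

theorem kerP_funOf {n : ℕ} {P : BPartition n} {m : ℕ} {y : {C // C ∈ reps P} → ℤ}
    (hy : y ∈ labels _ m) : kerP (funOf y) = P := by
  apply sameB_ext
  intro a b
  rw [sameB_kerP]
  constructor
  · rintro ⟨ha, hb, h⟩
    rw [oddExt_funOf y ha, oddExt_funOf y hb] at h
    have h1 := blockOf_spec P ha
    have h2 := blockOf_spec P hb
    have h3 := bv_inj hy h1.1 h2.1 h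
    exact ⟨_, h1.1, h1.2, h3 ▸ h2.2⟩
  · rintro ⟨C, hC, ha, hb⟩
    have ha' := block_sub P hC ha
    have hb' := block_sub P hC hb
    refine ⟨ha', hb', ?_⟩
    rw [oddExt_funOf y ha', oddExt_funOf y hb', blockOf_eq P hC ha, blockOf_eq P hC hb]

theorem labOf_funOf {n : ℕ} {P : BPartition n} (y : {C // C ∈ reps P} → ℤ) :
    labOf P (funOf y) = y := by
  funext C
  unfold labOf
  have h := reps_mx C.2
  have hb := reps_block C.2
  rw [oddExt_funOf y (block_sub P hb h), blockOf_eq P hb h, bv_pos y C.2]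

theorem oddExt_congr {n : ℕ} {f : Fin n → ℤ} {C : Finset ℤ} (hC : C ∈ (kerP f).blocks) {a b : ℤ}
    (ha : a ∈ C) (hb : b ∈ C) : oddExt f a = oddExt f b :=
  ((sameB_kerP f a b).1 ⟨C, hC, ha, hb⟩).2.2

theorem funOf_labOf {n : ℕ} (f : Fin n → ℤ) : funOf (labOf (kerP f) f) = f := by
  funext i
  unfold funOf
  have hs := blockOf_spec (kerP f) (gnd_pos i)
  generalize blockOf (kerP f) ((i : ℕ) + 1) = C at hs
  obtain ⟨hC, hi⟩ := hs
  rw [← oddExt_pos f i]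
  unfold bv
  split_ifs with h1 h2
  · exact oddExt_congr hC (reps_mx h1) hi
  · unfold labOf
    have h3 := oddExt_congr (f := f) ((kerP f).closed C hC) (reps_mx h2)
      (mem_negSet.2 (by rwa [neg_neg]) : -(((i : ℕ) : ℤ) + 1) ∈ negSet C)
    simp only
    rw [h3, oddExt_neg, neg_neg]
  · have hc : negSet C = C := by
      by_contra hne
      rcases reps_or hC hne with h | h
      · exact h1 h
      · exact h2 h
    have h3 : -(((i : ℕ) : ℤ) + 1) ∈ C := by
      rw [← hc]
      exact mem_negSet.2 (by rwa [neg_neg])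
    have h4 := oddExt_congr hC hi h3
    rw [oddExt_neg] at h4
    omega

theorem oddExt_abs {n m : ℕ} {f : Fin n → ℤ} (hf : f ∈ fbox n m) {x : ℤ} (hx : x ∈ gnd n) :
    |oddExt f x| ≤ m := by
  unfold fbox at hf
  simp only [Fintype.mem_piFinset, Finset.mem_Icc] at hf
  rcases lt_or_gt_of_ne (mem_gnd.1 hx).1 with h0 | h0
  · obtain ⟨i, hi⟩ := pos_gnd (neg_mem_gnd.2 hx) (by omega : 0 < -x)
    rw [← abs_neg, ← oddExt_neg, hi, oddExt_pos]
    exact abs_le.2 (hf i)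
  · obtain ⟨i, rfl⟩ := pos_gnd hx h0
    rw [oddExt_pos]
    exact abs_le.2 (hf i)

theorem labOf_mem {n m : ℕ} {f : Fin n → ℤ} (hf : f ∈ fbox n m) :
    labOf (kerP f) f ∈ labels _ m := by
  unfold labels
  simp only [Finset.mem_filter, Fintype.mem_piFinset, Finset.mem_Icc]
  have hg : ∀ C : {C // C ∈ reps (kerP f)}, ((mx C.1 : ℕ) : ℤ) ∈ gnd n := fun C =>
    block_sub (kerP f) (reps_block C.2) (reps_mx C.2)
  refine ⟨fun C => abs_le.1 (oddExt_abs hf (hg C)), fun C h => ?_, fun C D h => ?_⟩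
  · apply reps_ne C.2
    unfold labOf at h
    obtain ⟨D, hD, h1, h2⟩ := (sameB_kerP f (mx C.1) (-(mx C.1 : ℤ))).2
      ⟨hg C, neg_mem_gnd.2 (hg C), by rw [oddExt_neg, h, neg_zero]⟩
    have e : C.1 = D := block_unique _ (reps_block C.2) hD (reps_mx C.2) h1
    rw [← e] at h2
    refine block_unique (kerP f) ((kerP f).closed _ (reps_block C.2)) (reps_block C.2)
      (x := -(mx C.1 : ℤ)) (mem_negSet.2 ?_) h2
    rw [neg_neg]
    exact reps_mx C.2
  · simp only [labOf] at h
    rcases abs_eq_abs.1 h with h | h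
    · obtain ⟨E, hE, h1, h2⟩ := (sameB_kerP f (mx C.1) (mx D.1)).2 ⟨hg C, hg D, h⟩
      apply Subtype.ext
      rw [block_unique _ (reps_block C.2) hE (reps_mx C.2) h1,
        block_unique _ (reps_block D.2) hE (reps_mx D.2) h2]
    · exfalso
      rw [← oddExt_neg] at h
      obtain ⟨E, hE, h1, h2⟩ := (sameB_kerP f (mx C.1) (-(mx D.1 : ℤ))).2
        ⟨hg C, neg_mem_gnd.2 (hg D), h⟩
      have e1 : C.1 = E := block_unique _ (reps_block C.2) hE (reps_mx C.2) h1
      have e2 : negSet D.1 = E := block_unique _ ((kerP f).closed _ (reps_block D.2)) hE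
        (mem_negSet.2 (by rw [neg_neg]; exact reps_mx D.2)) h2
      apply reps_not_neg D.2
      rw [e2, ← e1]
      exact C.2

theorem fiber_card {n : ℕ} (P : BPartition n) (m : ℕ) :
    ((fbox n m).filter fun f => kerP f = P).card
      = 2 ^ (reps P).card * m.descFactorial (reps P).card := by
  have e := card_labels {C // C ∈ reps P} m
  rw [Fintype.card_coe] at e
  rw [← e]
  refine Finset.card_bij' (fun f _ => labOf P f) (fun y _ => funOf y) ?_ ?_ ?_ ?_
  · intro f hf
    obtain ⟨h1, rfl⟩ := Finset.mem_filter.1 hf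
    exact labOf_mem h1
  · intro y hy
    refine Finset.mem_filter.2 ⟨?_, kerP_funOf hy⟩
    unfold fbox
    simp only [Fintype.mem_piFinset, Finset.mem_Icc]
    exact fun i => abs_le.1 (bv_abs hy _)
  · intro f hf
    obtain ⟨h1, rfl⟩ := Finset.mem_filter.1 hf
    exact funOf_labOf f
  · intro y _
    exact labOf_funOf y

theorem card_fbox (n m : ℕ) : (fbox n m).card = (2 * m + 1) ^ n := by
  unfold fbox
  rw [Fintype.card_piFinset]
  simp only [Int.card_Icc, Finset.prod_const, Finset.card_univ, Fintype.card_fin]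
  congr 1
  omega

theorem card_one_zero (n m : ℕ) :
    ((fbox (n + 1) m).filter fun f => (zeros f).card = 1).card = (n + 1) * (2 * m) ^ n := by
  have e : ((fbox (n + 1) m).filter fun f => (zeros f).card = 1)
      = Finset.univ.biUnion fun i : Fin (n + 1) => Fintype.piFinset fun j =>
        if j = i then {0} else (Finset.Icc (-(m : ℤ)) m).erase 0 := by
    ext f
    simp only [Finset.mem_filter, Finset.mem_biUnion, Finset.mem_univ, true_and,
      Fintype.mem_piFinset, Finset.card_eq_one, fbox]
    constructor
    · rintro ⟨h1, i, hi⟩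
      refine ⟨i, fun j => ?_⟩
      have hj : f j = 0 ↔ j = i := by
        have : j ∈ zeros f ↔ j ∈ ({i} : Finset (Fin (n + 1))) := by rw [hi]
        simpa [zeros] using this
      split_ifs with h
      · rw [Finset.mem_singleton]
        exact hj.2 h
      · exact Finset.mem_erase.2 ⟨fun h0 => h (hj.1 h0), h1 j⟩
    · rintro ⟨i, hi⟩
      refine ⟨fun j => ?_, i, ?_⟩
      · have := hi j
        split_ifs at this with h
        · rw [Finset.mem_singleton] at this
          rw [this, Finset.mem_Icc]
          omega
        · exact (Finset.mem_erase.1 this).2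
      · ext j
        simp only [zeros, Finset.mem_filter, Finset.mem_univ, true_and, Finset.mem_singleton]
        have := hi j
        split_ifs at this with h
        · rw [Finset.mem_singleton] at this
          exact iff_of_true this h
        · exact iff_of_false (Finset.mem_erase.1 this).1 h
  rw [e, Finset.card_biUnion]
  · have : ∀ i : Fin (n + 1), (Fintype.piFinset fun j : Fin (n + 1) =>
        if j = i then ({0} : Finset ℤ) else (Finset.Icc (-(m : ℤ)) m).erase 0).card
        = (2 * m) ^ n := by
      intro i
      rw [Fintype.card_piFinset, ← Finset.mul_prod_erase _ _ (Finset.mem_univ i)]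
      rw [if_pos rfl, Finset.card_singleton, one_mul]
      rw [Finset.prod_congr rfl (g := fun _ => 2 * m)]
      · rw [Finset.prod_const, Finset.card_erase_of_mem (Finset.mem_univ i)]
        simp
      · intro j hj
        rw [if_neg (Finset.mem_erase.1 hj).1, Finset.card_erase_of_mem, Int.card_Icc]
        · omega
        · rw [Finset.mem_Icc]
          omega
    rw [Finset.sum_congr rfl fun i _ => this i]
    simp
  · intro i _ j _ hne
    rw [Function.onFun, Finset.disjoint_left]
    intro f hf hf'
    rw [Fintype.mem_piFinset] at hf hf'
    have h1 := hf i
    have h2 := hf' i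
    rw [if_pos rfl, Finset.mem_singleton] at h1
    rw [if_neg hne] at h2
    exact (Finset.mem_erase.1 h2).1 h1

theorem SD_eq (n r : ℕ) : SD n r =
    ((Finset.univ.filter fun P : BPartition n => IsDPartition P).filter
      fun P => (reps P).card = r).card := by
  unfold SD
  refine Nat.subtype_card _ fun P => ?_
  rw [Finset.mem_filter, Finset.mem_filter, hasPairs_iff]
  simp

theorem stirling_side (n m : ℕ) :
    ∑ r ∈ Finset.range (n + 1 + 1), 2 ^ r * Nat.factorial r * SD (n + 1) r * m.choose r
      + (n + 1) * (2 * m) ^ n = (2 * m + 1) ^ (n + 1) := by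
  rw [← card_one_zero, ← card_fbox]
  rw [← Finset.card_filter_add_card_filter_not (s := fbox (n + 1) m)
    (fun f => (zeros f).card = 1), add_comm]
  congr 1
  have h1 : ((fbox (n + 1) m).filter fun f => ¬ (zeros f).card = 1)
      = (fbox (n + 1) m).filter fun f => IsDPartition (kerP f) := by
    refine Finset.filter_congr fun f _ => ?_
    rw [isD_kerP]
  rw [h1, Finset.card_eq_sum_card_fiberwise (f := fun f => kerP f)
    (t := Finset.univ.filter fun P : BPartition (n + 1) => IsDPartition P)]
  · rw [← Finset.sum_fiberwise_of_maps_to (t := Finset.range (n + 1 + 1))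
      (g := fun P : BPartition (n + 1) => (reps P).card)]
    · refine Finset.sum_congr rfl fun r _ => ?_
      rw [Finset.sum_congr rfl (g := fun _ => 2 ^ r * m.descFactorial r)]
      · rw [Finset.sum_const, smul_eq_mul, SD_eq, Nat.descFactorial_eq_factorial_mul_choose]
        ring
      · intro P hP
        obtain ⟨hP, hr⟩ := Finset.mem_filter.1 hP
        have hD := (Finset.mem_filter.1 hP).2
        rw [← hr, ← fiber_card P m, Finset.filter_filter]
        congr 1
        refine Finset.filter_congr fun f _ => ?_
        constructor
        · exact fun h => h.2
        · rintro rfl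
          exact ⟨hD, rfl⟩
    · intro P _
      have := card_reps_le P
      exact Finset.mem_range.2 (by omega)
  · intro f hf
    have := (Finset.mem_filter.1 (Finset.mem_coe.1 hf)).2
    exact Finset.mem_coe.2 (Finset.mem_filter.2 ⟨Finset.mem_univ _, this⟩)

theorem eulerian_stirling_typeD (n k : ℕ) (hn : 2 ≤ n) (hk : k ≤ n) :
    (EulD n k : ℤ) =
      (∑ r ∈ Finset.range (k + 1),
        (-1 : ℤ) ^ (k - r) * 2 ^ r * Nat.factorial r * SD n r * Nat.choose (n - r) (k - r)) -
        n * 2 ^ (n - 1) * EulA (n - 1) (k - 1) := by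
  obtain ⟨N, rfl⟩ : ∃ N, n = N + 2 := ⟨n - 2, by omega⟩
  have h := inversion (N + 2)
    (fun k => ((EulD (N + 2) k + (N + 2) * 2 ^ (N + 1) * EulA (N + 1) (k - 1) : ℕ) : ℤ))
    (fun r => ((2 ^ r * Nat.factorial r * SD (N + 2) r : ℕ) : ℤ)) ?_ k hk
  · rw [eq_sub_iff_add_eq]
    have e : N + 2 - 1 = N + 1 := by omega
    rw [e]
    push_cast at h ⊢
    rw [h]
    refine Finset.sum_congr rfl fun r _ => ?_
    ring
  · intro m
    have h1 := eulerian_side N m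
    have h2 := stirling_side (N + 1) m
    have h3 := Nat.add_right_cancel (h1.trans h2.symm)
    exact_mod_cast h3
end

section
/- For every non-negative integer n and every real number x, one has x^n = Σ_{k=0}^{n} S_B(n,k) · ∏_{j=1}^{k} (x − (2j−1)), where the empty product (k = 0) equals 1. -/
open Classical Finset

/-! ### Codes of `Bₙ`-partitions -/

/-- The signed ground set. -/
noncomputable def gset (n : ℕ) : Finset ℤ := (Finset.Icc (-(n:ℤ)) n).erase 0

theorem mem_gset {n : ℕ} {x : ℤ} : x ∈ gset n ↔ x ≠ 0 ∧ |x| ≤ (n : ℤ) := by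
  simp [gset, abs_le]

theorem neg_mem_gset {n : ℕ} {x : ℤ} (h : x ∈ gset n) : -x ∈ gset n := by
  rw [mem_gset] at *; simpa using h

/-- Code of a partition: every `i` is sent to the representative of its block. -/
def IsCode (n : ℕ) (f : ℕ → ℤ) : Prop :=
  (∀ i, n < i → f i = 0) ∧ (∀ i, (f i).natAbs ≤ i) ∧ ∀ i, f (f i).natAbs = (f i).natAbs

/-- The number of positive representatives. -/
noncomputable def kval (n : ℕ) (f : ℕ → ℤ) : ℕ :=
  ((Finset.Icc 1 n).filter fun i => f i = (i : ℤ)).card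

/-- Options for the next value. -/
noncomputable def opts (n : ℕ) (f : ℕ → ℤ) : Finset ℤ :=
  (Finset.Icc (-(n:ℤ)) n).filter fun v => f v.natAbs = v.natAbs

/-- All codes. -/
noncomputable def codes : ℕ → Finset (ℕ → ℤ)
  | 0 => {fun _ => 0}
  | n + 1 => (codes n).biUnion fun f =>
      (insert ((n:ℤ) + 1) (opts n f)).image fun v => Function.update f (n + 1) v

theorem mem_codes (n : ℕ) (f : ℕ → ℤ) : f ∈ codes n ↔ IsCode n f := by
  induction n generalizing f with
  | zero =>
    simp only [codes, Finset.mem_singleton, IsCode]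
    constructor
    · rintro rfl; simp
    · rintro ⟨h1, h2, -⟩
      funext i
      rcases Nat.eq_zero_or_pos i with rfl | hi
      · have := h2 0; omega
      · exact h1 i hi
  | succ n ih =>
    simp only [codes, Finset.mem_biUnion, Finset.mem_image]
    constructor
    · rintro ⟨g, hg, v, hv, rfl⟩
      obtain ⟨h1, h2, h3⟩ := (ih g).1 hg
      simp only [Finset.mem_insert, opts, Finset.mem_filter, Finset.mem_Icc] at hv
      refine ⟨?_, ?_, ?_⟩
      · intro i hi
        rw [Function.update_of_ne (by omega)]
        exact h1 i (by omega)
      · intro i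
        rcases eq_or_ne i (n+1) with rfl | hi
        · rw [Function.update_self]; omega
        · rw [Function.update_of_ne hi]; exact h2 i
      · intro i
        rcases eq_or_ne i (n+1) with rfl | hi
        · rw [Function.update_self]
          rcases hv with rfl | hv
          · have : ((n:ℤ)+1).natAbs = n + 1 := by omega
            rw [this, Function.update_self]; simp
          · rw [Function.update_of_ne (by omega)]; exact hv.2
        · rw [Function.update_of_ne hi, Function.update_of_ne, h3]
          have := h2 i
          intro h
          have := h1 i (by omega)
          rw [this] at h; simp at h
    · rintro ⟨h1, h2, h3⟩
      refine ⟨Function.update f (n+1) 0, (ih _).2 ⟨?_, ?_, ?_⟩, f (n+1), ?_, by simp⟩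
      · intro i hi
        rcases eq_or_ne i (n+1) with rfl | hi'
        · simp
        · rw [Function.update_of_ne hi']; exact h1 i (by omega)
      · intro i
        rcases eq_or_ne i (n+1) with rfl | hi'
        · simp
        · rw [Function.update_of_ne hi']; exact h2 i
      · intro i
        rcases eq_or_ne i (n+1) with rfl | hi'
        · have := h2 0
          rw [Function.update_self, Function.update_of_ne (by simp)]; simp; omega
        · rw [Function.update_of_ne hi', Function.update_of_ne, h3]
          have := h2 i
          intro h
          have := h1 i (by omega)
          rw [this] at h; simp at h
      · simp only [Finset.mem_insert, opts, Finset.mem_filter, Finset.mem_Icc]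
        have a := h2 (n+1)
        have b := h3 (n+1)
        by_cases hc : (f (n+1)).natAbs = n + 1
        · left; rw [hc] at b; rw [b]; push_cast; ring
        · right
          rw [Function.update_of_ne hc]
          exact ⟨by omega, b⟩

theorem card_reps {n : ℕ} (f : ℕ → ℤ) :
    ((gset n).filter fun v => f v.natAbs = v.natAbs).card = 2 * kval n f := by
  have : ((gset n).filter fun v => f v.natAbs = v.natAbs) =
      ((Finset.Icc 1 n).filter fun i => f i = (i : ℤ)).image (fun i : ℕ => (i : ℤ)) ∪
      ((Finset.Icc 1 n).filter fun i => f i = (i : ℤ)).image (fun i : ℕ => -(i : ℤ)) := by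
    ext v
    simp only [Finset.mem_filter, mem_gset, Finset.mem_union, Finset.mem_image, Finset.mem_Icc]
    constructor
    · rintro ⟨⟨h0, h1⟩, h2⟩
      rw [Int.abs_eq_natAbs] at h1
      rcases lt_or_gt_of_ne h0 with h | h
      · right; exact ⟨v.natAbs, ⟨by omega, h2⟩, by omega⟩
      · left; exact ⟨v.natAbs, ⟨by omega, h2⟩, by omega⟩
    · rintro (⟨i, ⟨hi, h⟩, rfl⟩ | ⟨i, ⟨hi, h⟩, rfl⟩)
      · simp; exact ⟨by omega, h⟩
      · simp; exact ⟨by omega, h⟩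
  rw [this, Finset.card_union_of_disjoint, Finset.card_image_of_injective,
    Finset.card_image_of_injective, kval]
  · ring
  · intro a b h; simpa using h
  · intro a b h; simpa using h
  · rw [Finset.disjoint_left]
    intro a ha hb
    simp only [Finset.mem_filter, Finset.mem_image, Finset.mem_Icc] at ha hb
    obtain ⟨i, hi, rfl⟩ := ha
    obtain ⟨j, hj, h⟩ := hb
    omega

theorem card_opts {n : ℕ} {f : ℕ → ℤ} (hf : IsCode n f) :
    (opts n f).card = 2 * kval n f + 1 := by
  rw [← card_reps, opts, gset, Finset.filter_erase, Finset.card_erase_add_one]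
  have := hf.2.1 0
  simp; omega

theorem kval_update (n : ℕ) (f : ℕ → ℤ) (v : ℤ) :
    kval (n+1) (Function.update f (n+1) v) = kval n f + if v = (n:ℤ)+1 then 1 else 0 := by
  have e : (Finset.Icc 1 n).filter (fun i => Function.update f (n+1) v i = (i : ℤ)) =
      (Finset.Icc 1 n).filter (fun i => f i = (i : ℤ)) := by
    apply Finset.filter_congr
    intro i hi
    rw [Finset.mem_Icc] at hi
    rw [Function.update_of_ne (by omega)]
  rw [kval, ← Finset.insert_Icc_right_eq_Icc_add_one (by omega), Finset.filter_insert, e, kval]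
  simp only [Function.update_self]
  push_cast
  split_ifs with h
  · rw [Finset.card_insert_of_notMem]; simp
  · rfl

/-- The shifted falling factorial. -/
noncomputable def pp (x : ℝ) (k : ℕ) : ℝ := ∏ j ∈ Finset.Icc 1 k, (x - (2 * (j : ℝ) - 1))

theorem sum_codes (n : ℕ) (x : ℝ) : ∑ f ∈ codes n, pp x (kval n f) = x ^ n := by
  induction n with
  | zero => simp [codes, kval, pp]
  | succ n ih =>
    rw [codes, Finset.sum_biUnion, pow_succ, ← ih, Finset.sum_mul]
    · apply Finset.sum_congr rfl
      intro f hf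
      have hf' := (mem_codes n f).1 hf
      rw [Finset.sum_image (by
        intro a _ b _ h
        simpa using congrFun h (n+1))]
      have hn : ((n:ℤ)+1) ∉ opts n f := by simp [opts]
      rw [Finset.sum_insert hn]
      have : ∀ v ∈ opts n f, pp x (kval (n+1) (Function.update f (n+1) v)) = pp x (kval n f) := by
        intro v hv
        rw [kval_update, if_neg (by rintro rfl; exact hn hv), add_zero]
      rw [Finset.sum_congr rfl this, Finset.sum_const, card_opts hf', kval_update, if_pos rfl]
      have : pp x (kval n f + 1) = pp x (kval n f) * (x - (2 * ((kval n f : ℝ) + 1) - 1)) := by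
        rw [pp, Finset.prod_Icc_succ_top (by omega), pp]; push_cast; rfl
      rw [this, nsmul_eq_mul]; push_cast; ring
    · intro f hf g hg hne
      rw [Function.onFun, Finset.disjoint_left]
      intro h h1 h2
      rw [Finset.mem_image] at h1 h2
      obtain ⟨v, -, rfl⟩ := h1
      obtain ⟨w, -, h2⟩ := h2
      apply hne
      have hf' := (mem_codes n f).1 hf
      have hg' := (mem_codes n g).1 hg
      funext i
      rcases eq_or_ne i (n+1) with rfl | hi
      · rw [hf'.1 _ (by omega), hg'.1 _ (by omega)]
      · have := congrFun h2 i
        rw [Function.update_of_ne hi, Function.update_of_ne hi] at this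
        exact this.symm

/-! ### The odd extension and the partition of a code -/

/-- Odd extension. -/
def oddx (f : ℕ → ℤ) (x : ℤ) : ℤ := x.sign * f x.natAbs

theorem oddx_neg (f : ℕ → ℤ) (x : ℤ) : oddx f (-x) = - oddx f x := by simp [oddx]

theorem oddx_nat (f : ℕ → ℤ) (i : ℕ) (hi : 0 < i) : oddx f i = f i := by
  simp [oddx, Int.sign_eq_one_of_pos (show (0:ℤ) < i by omega)]

theorem oddx_eq_self (f : ℕ → ℤ) (x : ℤ) (hx : x ≠ 0) :
    oddx f x = x ↔ f x.natAbs = x.natAbs := by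
  rcases lt_or_gt_of_ne hx with h | h
  · rw [oddx, Int.sign_eq_neg_one_of_neg h]; omega
  · rw [oddx, Int.sign_eq_one_of_pos h]; omega

theorem oddx_abs_le {n : ℕ} {f : ℕ → ℤ} (hf : IsCode n f) (x : ℤ) : |oddx f x| ≤ |x| := by
  rw [Int.abs_eq_natAbs, Int.abs_eq_natAbs]
  have := hf.2.1 x.natAbs
  rcases lt_trichotomy x 0 with h | h | h
  · rw [oddx, Int.sign_eq_neg_one_of_neg h]; omega
  · simp [oddx, h]
  · rw [oddx, Int.sign_eq_one_of_pos h]; omega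

theorem oddx_idem {n : ℕ} {f : ℕ → ℤ} (hf : IsCode n f) (x : ℤ) :
    oddx f (oddx f x) = oddx f x := by
  by_cases h0 : oddx f x = 0
  · rw [h0]; simp [oddx]
  · rw [oddx_eq_self _ _ h0]
    have := hf.2.2 x.natAbs
    have e : (oddx f x).natAbs = (f x.natAbs).natAbs := by
      rcases lt_trichotomy x 0 with h | h | h
      · rw [oddx, Int.sign_eq_neg_one_of_neg h]; omega
      · exact absurd (by simp [oddx, h]) h0
      · rw [oddx, Int.sign_eq_one_of_pos h]; omega
    rw [e, this]

/-- The block of `x`. -/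
noncomputable def blk (n : ℕ) (f : ℕ → ℤ) (x : ℤ) : Finset ℤ :=
  (gset n).filter fun y => oddx f y = oddx f x

theorem mem_blk {n : ℕ} {f : ℕ → ℤ} {x y : ℤ} :
    y ∈ blk n f x ↔ y ∈ gset n ∧ oddx f y = oddx f x := by simp [blk]

theorem negSet_blk (n : ℕ) (f : ℕ → ℤ) (x : ℤ) : negSet (blk n f x) = blk n f (-x) := by
  ext y
  rw [mem_negSet, mem_blk, mem_blk, oddx_neg, oddx_neg]
  constructor
  · rintro ⟨h, h'⟩; exact ⟨by simpa using neg_mem_gset h, by omega⟩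
  · rintro ⟨h, h'⟩; exact ⟨neg_mem_gset h, by omega⟩

theorem blk_eq {n : ℕ} {f : ℕ → ℤ} {x y : ℤ} (hx : x ∈ gset n) :
    blk n f x = blk n f y ↔ oddx f x = oddx f y := by
  constructor
  · intro h
    have : x ∈ blk n f x := mem_blk.2 ⟨hx, rfl⟩
    rw [h] at this
    exact (mem_blk.1 this).2
  · intro h; simp [blk, h]

theorem blk_self_neg {n : ℕ} {f : ℕ → ℤ} {x : ℤ} (hx : x ∈ gset n) :
    negSet (blk n f x) = blk n f x ↔ oddx f x = 0 := by
  rw [negSet_blk, blk_eq (neg_mem_gset hx), oddx_neg]; omega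

/-- The partition of a code. -/
noncomputable def toPart (n : ℕ) (f : ℕ → ℤ) : BPartition n where
  blocks := (gset n).image (blk n f)
  cover := by
    intro x
    rw [← mem_gset]
    constructor
    · intro h; exact ⟨blk n f x, Finset.mem_image_of_mem _ h, mem_blk.2 ⟨h, rfl⟩⟩
    · rintro ⟨C, hC, hx⟩
      obtain ⟨y, hy, rfl⟩ := Finset.mem_image.1 hC
      exact (mem_blk.1 hx).1
  nonempty := by
    intro C hC
    obtain ⟨y, hy, rfl⟩ := Finset.mem_image.1 hC
    exact ⟨y, mem_blk.2 ⟨hy, rfl⟩⟩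
  disj := by
    intro C hC D hD hne
    obtain ⟨y, hy, rfl⟩ := Finset.mem_image.1 hC
    obtain ⟨z, hz, rfl⟩ := Finset.mem_image.1 hD
    rw [Finset.disjoint_left]
    intro a ha hb
    rw [mem_blk] at ha hb
    exact hne ((blk_eq hy).2 (ha.2.symm.trans hb.2))
  closed := by
    intro C hC
    obtain ⟨y, hy, rfl⟩ := Finset.mem_image.1 hC
    rw [negSet_blk]
    exact Finset.mem_image_of_mem _ (neg_mem_gset hy)
  zeroUnique := by
    intro C hC D hD h1 h2
    obtain ⟨y, hy, rfl⟩ := Finset.mem_image.1 hC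
    obtain ⟨z, hz, rfl⟩ := Finset.mem_image.1 hD
    rw [blk_self_neg hy] at h1
    rw [blk_self_neg hz] at h2
    rw [blk_eq hy, h1, h2]

theorem card_toPart {n : ℕ} {f : ℕ → ℤ} (hf : IsCode n f) :
    ((toPart n f).blocks.filter fun C => negSet C ≠ C).card = 2 * kval n f := by
  rw [← card_reps]
  have : ((toPart n f).blocks.filter fun C => negSet C ≠ C) =
      ((gset n).filter fun v => f v.natAbs = v.natAbs).image (blk n f) := by
    ext C
    simp only [toPart, Finset.mem_filter, Finset.mem_image]
    constructor
    · rintro ⟨⟨x, hx, rfl⟩, h⟩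
      rw [ne_eq, blk_self_neg hx] at h
      have hg : oddx f x ∈ gset n := by
        rw [mem_gset] at *
        exact ⟨h, (oddx_abs_le hf x).trans hx.2⟩
      refine ⟨oddx f x, ⟨hg, ?_⟩, ?_⟩
      · rw [← oddx_eq_self _ _ h]; exact oddx_idem hf x
      · rw [blk_eq hg]; exact oddx_idem hf x
    · rintro ⟨x, ⟨hx, h⟩, rfl⟩
      refine ⟨⟨x, hx, rfl⟩, ?_⟩
      have h0 := (mem_gset.1 hx).1
      rw [ne_eq, blk_self_neg hx, (oddx_eq_self _ _ h0).2 h]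
      exact h0
  rw [this, Finset.card_image_of_injOn]
  intro x hx y hy h
  simp only [Finset.coe_filter, Set.mem_ofPred_eq] at hx hy
  change blk n f x = blk n f y at h
  rw [blk_eq hx.1, (oddx_eq_self _ _ (mem_gset.1 hx.1).1).2 hx.2,
    (oddx_eq_self _ _ (mem_gset.1 hy.1).1).2 hy.2] at h
  exact h

/-! ### Every partition comes from exactly one code -/

/-- Being in the same block. -/
def BPartition.rel {n : ℕ} (P : BPartition n) (x y : ℤ) : Prop := ∃ C ∈ P.blocks, x ∈ C ∧ y ∈ C

section rel
variable {n : ℕ} (P : BPartition n)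

theorem BPartition.block_eq {C D : Finset ℤ} {x : ℤ} (hC : C ∈ P.blocks) (hD : D ∈ P.blocks)
    (h1 : x ∈ C) (h2 : x ∈ D) : C = D := by
  by_contra h
  exact Finset.disjoint_left.1 (P.disj C hC D hD h) h1 h2

theorem BPartition.rel_refl {x : ℤ} (hx : x ∈ gset n) : P.rel x x := by
  obtain ⟨C, hC, h⟩ := (P.cover x).1 (mem_gset.1 hx)
  exact ⟨C, hC, h, h⟩

theorem BPartition.rel_symm {x y : ℤ} (h : P.rel x y) : P.rel y x := by
  obtain ⟨C, hC, h⟩ := h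
  exact ⟨C, hC, h.2, h.1⟩

theorem BPartition.rel_trans {x y z : ℤ} (h : P.rel x y) (h' : P.rel y z) : P.rel x z := by
  obtain ⟨C, hC, h⟩ := h
  obtain ⟨D, hD, h'⟩ := h'
  obtain rfl := P.block_eq hC hD h.2 h'.1
  exact ⟨C, hC, h.1, h'.2⟩

theorem BPartition.rel_mem {x y : ℤ} (h : P.rel x y) : x ∈ gset n := by
  obtain ⟨C, hC, h⟩ := h
  exact mem_gset.2 ((P.cover x).2 ⟨C, hC, h.1⟩)

theorem BPartition.rel_neg {x y : ℤ} (h : P.rel x y) : P.rel (-x) (-y) := by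
  obtain ⟨C, hC, h⟩ := h
  exact ⟨negSet C, P.closed C hC, by simpa [mem_negSet] using h⟩

theorem BPartition.self_neg {C : Finset ℤ} {x : ℤ} (hC : C ∈ P.blocks) (hx : x ∈ C)
    (h : P.rel x (-x)) : negSet C = C := by
  obtain ⟨D, hD, h1, h2⟩ := h
  obtain rfl := P.block_eq hC hD hx h1
  exact P.block_eq (P.closed C hC) hC (mem_negSet.2 h2) hx

theorem BPartition.rel_zero {x y : ℤ} (hx : P.rel x (-x)) (hy : P.rel y (-y)) : P.rel x y := by
  obtain ⟨C, hC, h1, h2⟩ := id hx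
  obtain ⟨D, hD, h3, h4⟩ := id hy
  have := P.zeroUnique C hC D hD (P.self_neg hC h1 hx) (P.self_neg hD h3 hy)
  subst this
  exact ⟨C, hC, h1, h3⟩

/-- `v` is the representative of `x`. -/
def BPartition.rep (x v : ℤ) : Prop :=
  (P.rel x (-x) ∧ v = 0) ∨ (¬ P.rel x (-x) ∧ P.rel x v ∧ ∀ y, P.rel x y → |v| ≤ |y|)

theorem BPartition.rep_unique {x v w : ℤ} (h : P.rep x v) (h' : P.rep x w) : v = w := by
  rcases h with ⟨h1, h2⟩ | ⟨h1, h2, h3⟩ <;> rcases h' with ⟨h4, h5⟩ | ⟨h4, h5, h6⟩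
  · rw [h2, h5]
  · exact absurd h1 h4
  · exact absurd h4 h1
  · rcases abs_eq_abs.1 (le_antisymm (h3 w h5) (h6 v h2)) with h | h
    · exact h
    · exfalso
      subst h
      apply h1
      have := P.rel_neg h2
      rw [neg_neg] at this
      exact P.rel_trans h5 (P.rel_symm this)

theorem BPartition.rel_neg_congr {x y : ℤ} (h : P.rel x y) (h' : P.rel x (-x)) : P.rel y (-y) :=
  P.rel_trans (P.rel_symm h) (P.rel_trans h' (P.rel_neg h))

theorem BPartition.rep_congr {x y v : ℤ} (h : P.rel x y) (h' : P.rep x v) : P.rep y v := by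
  rcases h' with ⟨h1, h2⟩ | ⟨h1, h2, h3⟩
  · exact Or.inl ⟨P.rel_neg_congr h h1, h2⟩
  · exact Or.inr ⟨fun h4 => h1 (P.rel_neg_congr (P.rel_symm h) h4),
      P.rel_trans (P.rel_symm h) h2, fun z hz => h3 z (P.rel_trans h hz)⟩

theorem BPartition.rep_neg {x v : ℤ} (h' : P.rep x v) : P.rep (-x) (-v) := by
  rcases h' with ⟨h1, h2⟩ | ⟨h1, h2, h3⟩
  · exact Or.inl ⟨P.rel_neg h1, by simp [h2]⟩
  · refine Or.inr ⟨fun h4 => h1 ?_, P.rel_neg h2, fun z hz => ?_⟩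
    · simpa using P.rel_neg h4
    · have := h3 (-z) (by simpa using P.rel_neg hz)
      simpa using this

theorem BPartition.rep_rel {x y v : ℤ} (h : P.rep x v) (h' : P.rep y v) : P.rel x y := by
  have h0 : ∀ x, P.rel x 0 → False := fun x hx =>
    (mem_gset.1 (P.rel_mem (P.rel_symm hx))).1 rfl
  rcases h with ⟨h1, h2⟩ | ⟨h1, h2, h3⟩ <;> rcases h' with ⟨h4, h5⟩ | ⟨h4, h5, h6⟩
  · exact P.rel_zero h1 h4
  · subst h2; exact (h0 _ h5).elim
  · subst h5; exact (h0 _ h2).elim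
  · exact P.rel_trans h2 (P.rel_symm h5)

theorem BPartition.rep_exists {x : ℤ} (hx : x ∈ gset n) : ∃ v, P.rep x v := by
  by_cases h : P.rel x (-x)
  · exact ⟨0, Or.inl ⟨h, rfl⟩⟩
  · obtain ⟨C, hC, hxC⟩ := P.rel_refl hx
    obtain ⟨v, hv, hm⟩ := Finset.exists_min_image C (fun y => |y|) ⟨x, hxC.1⟩
    refine ⟨v, Or.inr ⟨h, ⟨C, hC, hxC.1, hv⟩, ?_⟩⟩
    rintro y ⟨D, hD, h1, h2⟩
    obtain rfl := P.block_eq hC hD hxC.1 h1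
    exact hm y h2

theorem BPartition.rep_abs_le {x v : ℤ} (hx : x ∈ gset n) (h' : P.rep x v) : |v| ≤ |x| := by
  rcases h' with ⟨h1, h2⟩ | ⟨h1, h2, h3⟩
  · simp [h2]
  · exact h3 x (P.rel_refl hx)

theorem BPartition.rep_rep {x v : ℤ} (hv : v ≠ 0) (h' : P.rep x v) : P.rep v v := by
  rcases id h' with ⟨h1, h2⟩ | ⟨h1, h2, h3⟩
  · exact absurd h2 hv
  · exact P.rep_congr h2 h'

theorem BPartition.ext_rel {P Q : BPartition n} (h : ∀ x y, P.rel x y ↔ Q.rel x y) : P = Q := by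
  have key : ∀ P Q : BPartition n, (∀ x y, P.rel x y ↔ Q.rel x y) →
      ∀ C ∈ P.blocks, C ∈ Q.blocks := by
    intro P Q h C hC
    obtain ⟨x, hx⟩ := P.nonempty C hC
    obtain ⟨D, hD, hxD, -⟩ := (h x x).1 ⟨C, hC, hx, hx⟩
    have : C = D := by
      ext y
      constructor
      · intro hy
        obtain ⟨E, hE, h1, h2⟩ := (h x y).1 ⟨C, hC, hx, hy⟩
        rwa [Q.block_eq hD hE hxD h1]
      · intro hy
        obtain ⟨E, hE, h1, h2⟩ := (h x y).2 ⟨D, hD, hxD, hy⟩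
        rwa [P.block_eq hC hE hx h1]
    rwa [this]
  have : P.blocks = Q.blocks :=
    Finset.ext fun C => ⟨key P Q h C, key Q P (fun x y => (h x y).symm) C⟩
  cases P; cases Q; simpa using this

end rel

theorem toPart_rel {n : ℕ} {f : ℕ → ℤ} {x y : ℤ} :
    (toPart n f).rel x y ↔ x ∈ gset n ∧ y ∈ gset n ∧ oddx f x = oddx f y := by
  simp only [BPartition.rel, toPart, Finset.mem_image]
  constructor
  · rintro ⟨C, ⟨z, hz, rfl⟩, h1, h2⟩
    rw [mem_blk] at h1 h2
    exact ⟨h1.1, h2.1, h1.2.trans h2.2.symm⟩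
  · rintro ⟨h1, h2, h3⟩
    exact ⟨_, ⟨x, h1, rfl⟩, mem_blk.2 ⟨h1, rfl⟩, mem_blk.2 ⟨h2, h3.symm⟩⟩

theorem toPart_rep {n : ℕ} {f : ℕ → ℤ} (hf : IsCode n f) {x : ℤ} (hx : x ∈ gset n) :
    (toPart n f).rep x (oddx f x) := by
  by_cases h0 : oddx f x = 0
  · left
    rw [toPart_rel, oddx_neg, h0]
    exact ⟨⟨hx, neg_mem_gset hx, by simp⟩, rfl⟩
  · right
    rw [toPart_rel, toPart_rel, oddx_neg, oddx_idem hf]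
    refine ⟨fun h => by omega, ⟨hx, ?_, rfl⟩, ?_⟩
    · rw [mem_gset] at *
      exact ⟨h0, (oddx_abs_le hf x).trans hx.2⟩
    · intro y hy
      rw [toPart_rel] at hy
      rw [hy.2.2]
      exact oddx_abs_le hf y

theorem toPart_inj {n : ℕ} {f g : ℕ → ℤ} (hf : IsCode n f) (hg : IsCode n g)
    (h : toPart n f = toPart n g) : f = g := by
  funext i
  rcases Nat.eq_zero_or_pos i with rfl | hi
  · have := hf.2.1 0
    have := hg.2.1 0
    omega
  by_cases hn : n < i
  · rw [hf.1 i hn, hg.1 i hn]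
  have hx : (i : ℤ) ∈ gset n := by rw [mem_gset]; simp; omega
  have h1 := toPart_rep hf hx
  rw [h] at h1
  have := BPartition.rep_unique _ h1 (toPart_rep hg hx)
  rwa [oddx_nat _ _ hi, oddx_nat _ _ hi] at this

theorem toPart_surj {n : ℕ} (P : BPartition n) : ∃ f, IsCode n f ∧ toPart n f = P := by
  have hmem : ∀ i : ℕ, 0 < i → i ≤ n → (i : ℤ) ∈ gset n := by
    intro i h1 h2; rw [mem_gset]; simp; omega
  have : ∀ i : ℕ, ∃ v : ℤ, (0 < i ∧ i ≤ n → P.rep i v) ∧ (¬ (0 < i ∧ i ≤ n) → v = 0) := by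
    intro i
    by_cases h : 0 < i ∧ i ≤ n
    · obtain ⟨v, hv⟩ := P.rep_exists (hmem i h.1 h.2)
      exact ⟨v, fun _ => hv, fun h' => absurd h h'⟩
    · exact ⟨0, fun h' => absurd h' h, fun _ => rfl⟩
  choose f hf1 hf2 using this
  have hrep : ∀ x ∈ gset n, P.rep x (oddx f x) := by
    intro x hx
    obtain ⟨h0, h1⟩ := mem_gset.1 hx
    rw [Int.abs_eq_natAbs] at h1
    have := hf1 x.natAbs ⟨by omega, by omega⟩
    rcases lt_or_gt_of_ne h0 with h | h
    · have := P.rep_neg this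
      have e : -(x.natAbs : ℤ) = x := by omega
      rw [e] at this
      rw [oddx, Int.sign_eq_neg_one_of_neg h]
      simpa using this
    · have e : (x.natAbs : ℤ) = x := by omega
      rw [e] at this
      rw [oddx, Int.sign_eq_one_of_pos h]
      simpa using this
  have hle : ∀ i, (f i).natAbs ≤ i := by
    intro i
    by_cases h : 0 < i ∧ i ≤ n
    · have := P.rep_abs_le (hmem i h.1 h.2) (hf1 i h)
      rw [Int.abs_eq_natAbs, Int.abs_eq_natAbs] at this; omega
    · rw [hf2 i h]; simp
  refine ⟨f, ⟨fun i hi => hf2 i (by omega), hle, ?_⟩, ?_⟩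
  · intro i
    by_cases h0 : f i = 0
    · rw [h0]; simp [hf2 0]
    · have h : 0 < i ∧ i ≤ n := by
        by_contra h
        exact h0 (hf2 i h)
      have hl := hle i
      rw [← oddx_eq_self _ _ h0]
      exact P.rep_unique (hrep _ (by rw [mem_gset, Int.abs_eq_natAbs]; omega)) (P.rep_rep h0 (hf1 i h))
  · apply BPartition.ext_rel
    intro x y
    rw [toPart_rel]
    constructor
    · rintro ⟨hx, hy, h⟩
      have h1 := hrep x hx
      rw [h] at h1
      exact P.rep_rel h1 (hrep y hy)
    · intro h
      have hx := P.rel_mem h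
      have hy := P.rel_mem (P.rel_symm h)
      exact ⟨hx, hy, P.rep_unique (P.rep_congr h (hrep x hx)) (hrep y hy)⟩

theorem SB_eq (n k : ℕ) : SB n k = ((codes n).filter fun f => kval n f = k).card := by
  rw [SB, ← Nat.card_eq_finsetCard]
  symm
  have hc : ∀ f ∈ (codes n).filter (fun f => kval n f = k), IsCode n f ∧ kval n f = k := by
    intro f hf
    rw [Finset.mem_filter, mem_codes] at hf
    exact hf
  refine Nat.card_eq_of_bijective
    (fun f => (⟨toPart n f.1, by
      rw [hasPairs, card_toPart (hc _ f.2).1, (hc _ f.2).2]⟩ :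
        { P : BPartition n // hasPairs P k })) ⟨?_, ?_⟩
  · intro f g h
    exact Subtype.ext (toPart_inj (hc _ f.2).1 (hc _ g.2).1 (congrArg Subtype.val h))
  · rintro ⟨P, hP⟩
    obtain ⟨f, hf, rfl⟩ := toPart_surj P
    rw [hasPairs, card_toPart hf] at hP
    refine ⟨⟨f, ?_⟩, rfl⟩
    rw [Finset.mem_filter, mem_codes]
    exact ⟨hf, by omega⟩

/-- `x^n = Σ_{k=0}^{n} S_B(n,k) · (x−1)(x−3)⋯(x−(2k−1))`. -/
theorem falling_factorial_typeB (n : ℕ) (x : ℝ) :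
    x ^ n = ∑ k ∈ Finset.range (n + 1),
      (SB n k : ℝ) * ∏ j ∈ Finset.Icc 1 k, (x - (2 * (j : ℝ) - 1)) := by
  rw [← sum_codes n x, ← Finset.sum_fiberwise_of_maps_to
    (s := codes n) (t := Finset.range (n + 1)) (g := kval n)]
  · apply Finset.sum_congr rfl
    intro k _
    rw [SB_eq, ← nsmul_eq_mul, ← Finset.sum_const]
    apply Finset.sum_congr rfl
    intro f hf
    rw [(Finset.mem_filter.1 hf).2, pp]
  · intro f _
    rw [Finset.mem_range, Nat.lt_succ_iff, kval]
    exact (Finset.card_filter_le _ _).trans (by simp)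
end
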